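/- arXiv:0811.0359 — 2 statements merged into one kernel-verified Lean document; each statement's English description precedes it below -/
import Mathlib

section
/- Let Φ be a generalized Horn first-order theory. For every ground disjunctive logic program P, ι^∨_HP(Φ,P) ≡ᴱ_oga ι^∨_EH(Φ,P); and for every ground normal logic program P, ι_HP(Φ,P) ≡ᴱ_oga ι_EH(Φ,P). -/
set_option autoImplicit false

/-! # First-order autoepistemic logic (FO-AEL): syntax -/

structure Sig : Type 1 where
  Func : Type
  Pred : Type
  arF : Func → ℕ
  arP : Pred → ℕ

inductive Term (S : Sig) : Type
  | var : ℕ → Term S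
  | func : (f : S.Func) → (Fin (S.arF f) → Term S) → Term S

inductive Formula (S : Sig) : Type
  | atom : (p : S.Pred) → (Fin (S.arP p) → Term S) → Formula S
  | eq : Term S → Term S → Formula S
  | not : Formula S → Formula S
  | and : Formula S → Formula S → Formula S
  | ex : ℕ → Formula S → Formula S
  | box : Formula S → Formula S

namespace Term

variable {S : Sig}

/-- A term is ground if it contains no variables; ground terms are the *names*. -/
def isGround : Term S → Prop
  | var _ => False
  | func _ ts => ∀ i, (ts i).isGround

def hasVar (x : ℕ) : Term S → Prop
  | var y => y = x
  | func _ ts => ∃ i, (ts i).hasVar x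

/-- Application of a partial (name) substitution to a term. -/
def subst (β : ℕ → Option (Term S)) : Term S → Term S
  | var x => (β x).getD (var x)
  | func f ts => func f (fun i => (ts i).subst β)

/-- The function symbols occurring in a term. -/
def funcs : Term S → Set S.Func
  | var _ => ∅
  | func f ts => insert f (⋃ i, (ts i).funcs)

/-- `t` is a name (ground term) over the set `F` of function symbols. -/
def isNameOf (F : Set S.Func) : Term S → Prop
  | var _ => False
  | func f ts => f ∈ F ∧ ∀ i, (ts i).isNameOf F

end Term

namespace Formula

variable {S : Sig}

/-- A formula is objective if it is 𝖫-free. -/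
def isObjective : Formula S → Prop
  | atom _ _ => True
  | eq _ _ => True
  | not φ => φ.isObjective
  | and φ ψ => φ.isObjective ∧ ψ.isObjective
  | ex _ φ => φ.isObjective
  | box _ => False

def isGround : Formula S → Prop
  | atom _ ts => ∀ i, (ts i).isGround
  | eq t₁ t₂ => t₁.isGround ∧ t₂.isGround
  | not φ => φ.isGround
  | and φ ψ => φ.isGround ∧ ψ.isGround
  | ex _ _ => False
  | box φ => φ.isGround

def isAtomic : Formula S → Prop
  | atom _ _ => True
  | eq _ _ => True
  | not _ => False
  | and _ _ => False
  | ex _ _ => False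
  | box _ => False

/-- The modal operator 𝖫 occurs only applied to (objective) atomic formulas. -/
def boxAtomic : Formula S → Prop
  | atom _ _ => True
  | eq _ _ => True
  | not φ => φ.boxAtomic
  | and φ ψ => φ.boxAtomic ∧ ψ.boxAtomic
  | ex _ φ => φ.boxAtomic
  | box φ => φ.isAtomic

/-- Propositional formulas: built from 0-ary predicates only. -/
def isPropositional : Formula S → Prop
  | atom p _ => S.arP p = 0
  | eq _ _ => False
  | not φ => φ.isPropositional
  | and φ ψ => φ.isPropositional ∧ ψ.isPropositional
  | ex _ _ => False
  | box _ => False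

def freeIn (x : ℕ) : Formula S → Prop
  | atom _ ts => ∃ i, (ts i).hasVar x
  | eq t₁ t₂ => t₁.hasVar x ∨ t₂.hasVar x
  | not φ => φ.freeIn x
  | and φ ψ => φ.freeIn x ∨ ψ.freeIn x
  | ex y φ => x ≠ y ∧ φ.freeIn x
  | box φ => φ.freeIn x

/-- A formula is closed (a sentence) if it has no free variables. -/
def closed (φ : Formula S) : Prop := ∀ x, ¬ φ.freeIn x

/-- Capture-avoiding application of a partial name substitution (values are ground). -/
def subst (β : ℕ → Option (Term S)) : Formula S → Formula S
  | atom p ts => atom p (fun i => (ts i).subst β)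
  | eq t₁ t₂ => eq (t₁.subst β) (t₂.subst β)
  | not φ => not (φ.subst β)
  | and φ ψ => and (φ.subst β) (ψ.subst β)
  | ex y φ => ex y (φ.subst (fun z => if z = y then none else β z))
  | box φ => box (φ.subst β)

def funcs : Formula S → Set S.Func
  | atom _ ts => ⋃ i, (ts i).funcs
  | eq t₁ t₂ => t₁.funcs ∪ t₂.funcs
  | not φ => φ.funcs
  | and φ ψ => φ.funcs ∪ ψ.funcs
  | ex _ φ => φ.funcs
  | box φ => φ.funcs

def preds : Formula S → Set S.Pred
  | atom p _ => {p}
  | eq _ _ => ∅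
  | not φ => φ.preds
  | and φ ψ => φ.preds ∪ ψ.preds
  | ex _ φ => φ.preds
  | box φ => φ.preds

/-- `φ ∨ ψ` as an abbreviation: `¬(¬φ ∧ ¬ψ)`. -/
def or (φ ψ : Formula S) : Formula S := not (and (not φ) (not ψ))

/-- `φ ⊃ ψ` as an abbreviation: `¬(φ ∧ ¬ψ)`. -/
def imp (φ ψ : Formula S) : Formula S := not (and φ (not ψ))

/-- `∀x.φ` as an abbreviation: `¬∃x.¬φ`. -/
def all (x : ℕ) (φ : Formula S) : Formula S := not (ex x (not φ))

end Formula

/-! ## Semantics -/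

structure Interp (S : Sig) where
  U : Type
  nonempty : Nonempty U
  interpF : (f : S.Func) → (Fin (S.arF f) → U) → U
  interpP : (p : S.Pred) → (Fin (S.arP p) → U) → Prop

noncomputable def Interp.dflt {S : Sig} (w : Interp S) : w.U := Classical.choice w.nonempty

def Term.eval {S : Sig} (w : Interp S) (B : ℕ → w.U) : Term S → w.U
  | Term.var x => B x
  | Term.func f ts => w.interpF f (fun i => (ts i).eval w B)

/-- Evaluation of a ground term (the assignment is irrelevant). -/
noncomputable def Term.evalG {S : Sig} (w : Interp S) (t : Term S) : w.U :=
  t.eval w (fun _ => w.dflt)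

/-- An individual is named if some name (ground term) denotes it. -/
def IsNamed {S : Sig} (w : Interp S) (k : w.U) : Prop :=
  ∃ t : Term S, t.isGround ∧ Term.evalG w t = k

/-- A name substitution `β` is associated with the variable assignment `B`:
its domain is exactly the set of variables whose `B`-value is named, and
it assigns to each such variable a name denoting its `B`-value. -/
def Assoc {S : Sig} (w : Interp S) (B : ℕ → w.U) (β : ℕ → Option (Term S)) : Prop :=
  ∀ x : ℕ,
    (IsNamed w (B x) → (β x).isSome) ∧
    (∀ t : Term S, β x = some t → t.isGround ∧ Term.evalG w t = B x)

/-- The two semantics: any-name (E) and all-name (A). -/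
inductive Sem : Type
  | any
  | all

/-- Satisfaction of a formula in an autoepistemic interpretation `⟨w,Γ⟩`
under a variable assignment, for the any-name (E) resp. all-name (A) semantics. -/
def Sat {S : Sig} (X : Sem) (w : Interp S) (Γ : Set (Formula S)) :
    Formula S → (ℕ → w.U) → Prop
  | Formula.atom p ts, B => w.interpP p (fun i => (ts i).eval w B)
  | Formula.eq t₁ t₂, B => t₁.eval w B = t₂.eval w B
  | Formula.not φ, B => ¬ Sat X w Γ φ B
  | Formula.and φ ψ, B => Sat X w Γ φ B ∧ Sat X w Γ ψ B
  | Formula.ex x φ, B => ∃ u : w.U, Sat X w Γ φ (Function.update B x u)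
  | Formula.box φ, B =>
      match X with
      | Sem.any => ∃ β, Assoc w B β ∧ (φ.subst β).closed ∧ φ.subst β ∈ Γ
      | Sem.all => ∀ β, Assoc w B β → (φ.subst β).closed ∧ φ.subst β ∈ Γ

def ModelsF {S : Sig} (X : Sem) (w : Interp S) (Γ : Set (Formula S)) (φ : Formula S) : Prop :=
  ∀ B : ℕ → w.U, Sat X w Γ φ B

def ModelsT {S : Sig} (X : Sem) (w : Interp S) (Γ Φ : Set (Formula S)) : Prop :=
  ∀ φ ∈ Φ, ModelsF X w Γ φ

/-- `Φ ⊨ˣ_Γ φ`. -/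
def Entails {S : Sig} (X : Sem) (Φ Γ : Set (Formula S)) (φ : Formula S) : Prop :=
  ∀ w : Interp S, ModelsT X w Γ Φ → ModelsF X w Γ φ

/-- The standard names assumption: all names are interpreted distinctly
and every individual is named. -/
def SNA {S : Sig} (w : Interp S) : Prop :=
  (∀ t₁ t₂ : Term S, t₁.isGround → t₂.isGround → Term.evalG w t₁ = Term.evalG w t₂ → t₁ = t₂) ∧
  (∀ k : w.U, IsNamed w k)

/-- Entailment restricted to interpretations satisfying the standard names assumption. -/
def EntailsSN {S : Sig} (X : Sem) (Φ Γ : Set (Formula S)) (φ : Formula S) : Prop :=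
  ∀ w : Interp S, SNA w → ModelsT X w Γ Φ → ModelsF X w Γ φ

/-- `T` is a stableˣ expansion of `Φ`. -/
def StableExp {S : Sig} (X : Sem) (Φ T : Set (Formula S)) : Prop :=
  T = {φ | Entails X Φ T φ}

def objOf {S : Sig} (T : Set (Formula S)) : Set (Formula S) :=
  {φ ∈ T | φ.isObjective}

def ogOf {S : Sig} (T : Set (Formula S)) : Set (Formula S) :=
  {φ ∈ T | φ.isObjective ∧ φ.isGround}

def ogaOf {S : Sig} (T : Set (Formula S)) : Set (Formula S) :=
  {φ ∈ T | φ.isObjective ∧ φ.isGround ∧ φ.isAtomic}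

def Consistent {S : Sig} (T : Set (Formula S)) : Prop := T ≠ Set.univ

/-- `Φ₁ ≡ˣ Φ₂`: same stableˣ expansions. -/
def ExpEquiv {S : Sig} (X : Sem) (Φ₁ Φ₂ : Set (Formula S)) : Prop :=
  ∀ T, StableExp X Φ₁ T ↔ StableExp X Φ₂ T

/-- `Φ₁ ≡ˣ_γ Φ₂` for a selector `sel` (e.g. `ogaOf`): the stableˣ expansions
correspond with respect to `sel`. -/
def ExpEquivSel {S : Sig} (X : Sem) (sel : Set (Formula S) → Set (Formula S))
    (Φ₁ Φ₂ : Set (Formula S)) : Prop :=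
  (∀ T, StableExp X Φ₁ T → ∃ T', StableExp X Φ₂ T' ∧ sel T = sel T') ∧
  (∀ T', StableExp X Φ₂ T' → ∃ T, StableExp X Φ₁ T ∧ sel T = sel T')

/-- Autoepistemicˣ consequences of `Φ`. -/
def Cn {S : Sig} (X : Sem) (Φ : Set (Formula S)) : Set (Formula S) :=
  {φ | ∀ T, StableExp X Φ T → φ ∈ T}

def CnO {S : Sig} (X : Sem) (Φ : Set (Formula S)) : Set (Formula S) :=
  {φ ∈ Cn X Φ | φ.isObjective}

def CnOg {S : Sig} (X : Sem) (Φ : Set (Formula S)) : Set (Formula S) :=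
  {φ ∈ Cn X Φ | φ.isObjective ∧ φ.isGround}

/-! ## Logic programs -/

structure PAtom (S : Sig) where
  p : S.Pred
  args : Fin (S.arP p) → Term S

namespace PAtom

variable {S : Sig}

def toFormula (a : PAtom S) : Formula S := Formula.atom a.p a.args

def isGround (a : PAtom S) : Prop := ∀ i, (a.args i).isGround

def hasVar (x : ℕ) (a : PAtom S) : Prop := ∃ i, (a.args i).hasVar x

def substA (σ : ℕ → Term S) (a : PAtom S) : PAtom S :=
  ⟨a.p, fun i => (a.args i).subst (fun x => some (σ x))⟩

def funcs (a : PAtom S) : Set S.Func := ⋃ i, (a.args i).funcs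

end PAtom

/-- A (disjunctive) rule `h₁ | … | h_l ← b₁,…,b_m, not c₁,…,not c_n`,
together with a list of the variables occurring in it. -/
structure Rule (S : Sig) where
  head : List (PAtom S)
  pos : List (PAtom S)
  neg : List (PAtom S)
  vars : List ℕ

namespace Rule

variable {S : Sig}

def atoms (r : Rule S) : List (PAtom S) := r.head ++ r.pos ++ r.neg

def hasVar (x : ℕ) (r : Rule S) : Prop := ∃ a ∈ r.atoms, PAtom.hasVar x a

/-- Well-formedness: at least one head atom, and `vars` lists all variables of the rule. -/
def wf (r : Rule S) : Prop := r.head ≠ [] ∧ ∀ x, r.hasVar x → x ∈ r.vars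

def isNormal (r : Rule S) : Prop := r.head.length = 1

def isGround (r : Rule S) : Prop := (∀ a ∈ r.atoms, a.isGround) ∧ r.vars = []

def isSafe (r : Rule S) : Prop := ∀ x, r.hasVar x → ∃ a ∈ r.pos, PAtom.hasVar x a

def isPositive (r : Rule S) : Prop := r.neg = []

def applySubst (σ : ℕ → Term S) (r : Rule S) : Rule S :=
  ⟨r.head.map (PAtom.substA σ), r.pos.map (PAtom.substA σ), r.neg.map (PAtom.substA σ), []⟩

end Rule

abbrev Program (S : Sig) := Set (Rule S)

def progWf {S : Sig} (P : Program S) : Prop := ∀ r ∈ P, r.wf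
def progNormal {S : Sig} (P : Program S) : Prop := ∀ r ∈ P, r.isNormal
def progGround {S : Sig} (P : Program S) : Prop := ∀ r ∈ P, r.isGround
def progSafe {S : Sig} (P : Program S) : Prop := ∀ r ∈ P, r.isSafe
def progPositive {S : Sig} (P : Program S) : Prop := ∀ r ∈ P, r.isPositive

/-- The function symbols occurring in `P` (part of the signature `Σ_P`). -/
def progFuncs {S : Sig} (P : Program S) : Set S.Func :=
  {f | ∃ r ∈ P, ∃ a ∈ r.atoms, f ∈ a.funcs}

/-- The predicate symbols occurring in `P` (part of the signature `Σ_P`). -/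
def progPreds {S : Sig} (P : Program S) : Set S.Pred :=
  {q | ∃ r ∈ P, ∃ a ∈ r.atoms, a.p = q}

/-- The ambient signature is exactly the signature `Σ_P` of `P`. -/
def fullSig {S : Sig} (P : Program S) : Prop :=
  (∀ f : S.Func, f ∈ progFuncs P) ∧ (∀ q : S.Pred, q ∈ progPreds P)

/-- Standing assumption: `Σ_P` contains a 0-ary function symbol whenever it
has a predicate symbol of arity greater than 0. -/
def goodSig {S : Sig} (P : Program S) : Prop :=
  (∃ q ∈ progPreds P, 0 < S.arP q) → ∃ f ∈ progFuncs P, S.arF f = 0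

/-! ## Embeddings of logic programs into FO-AEL -/

def andAll {S : Sig} : Formula S → List (Formula S) → Formula S
  | φ, [] => φ
  | φ, ψ :: rest => andAll (Formula.and φ ψ) rest

def orAll {S : Sig} : Formula S → List (Formula S) → Formula S
  | φ, [] => φ
  | φ, ψ :: rest => orAll (Formula.or φ ψ) rest

/-- `impOf ants c` is `⋀ ants ⊃ c` (just `c` if there are no antecedents). -/
def impOf {S : Sig} : List (Formula S) → Formula S → Formula S
  | [], c => c
  | a :: rest, c => Formula.imp (andAll a rest) c

/-- Disjunction of a nonempty list (junk value on the empty list,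
which is excluded by rule well-formedness). -/
def disjOf {S : Sig} : List (Formula S) → Formula S
  | [] => Formula.eq (Term.var 0) (Term.var 0)
  | h :: rest => orAll h rest

/-- Universal uclosure over the listed variables. -/
def uclosure {S : Sig} (vs : List ℕ) (φ : Formula S) : Formula S :=
  vs.foldr Formula.all φ

def bodyHP {S : Sig} (r : Rule S) : List (Formula S) :=
  r.pos.map PAtom.toFormula ++ r.neg.map (fun c => Formula.not (Formula.box c.toFormula))

def bodyE {S : Sig} (r : Rule S) : List (Formula S) :=
  r.pos.map (fun b => Formula.and b.toFormula (Formula.box b.toFormula)) ++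
    r.neg.map (fun c => Formula.not (Formula.box c.toFormula))

/-- `τ_HP(r)` resp. `τ^∨_HP(r)`. -/
def embHP {S : Sig} (r : Rule S) : Formula S :=
  uclosure r.vars (impOf (bodyHP r) (disjOf (r.head.map PAtom.toFormula)))

/-- `τ_EB(r)` resp. `τ^∨_EB(r)`. -/
def embEB {S : Sig} (r : Rule S) : Formula S :=
  uclosure r.vars (impOf (bodyE r) (disjOf (r.head.map PAtom.toFormula)))

/-- `τ_EH(r)` resp. `τ^∨_EH(r)`. -/
def embEH {S : Sig} (r : Rule S) : Formula S :=
  uclosure r.vars (impOf (bodyE r)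
    (disjOf (r.head.map (fun h => Formula.and h.toFormula (Formula.box h.toFormula)))))

/-- The unique-names axioms `¬𝖫(t₁=t₂) ⊃ t₁≠t₂` for distinct names of `Σ_P`. -/
def UNAax {S : Sig} (P : Program S) : Set (Formula S) :=
  {φ | ∃ t₁ t₂ : Term S, t₁.isNameOf (progFuncs P) ∧ t₂.isNameOf (progFuncs P) ∧ t₁ ≠ t₂ ∧
        φ = Formula.imp (Formula.not (Formula.box (Formula.eq t₁ t₂)))
              (Formula.not (Formula.eq t₁ t₂))}

/-- The positive introspection axioms `α ⊃ 𝖫α` for objective ground atoms of `Σ_P`. -/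
def PIAax {S : Sig} (P : Program S) : Set (Formula S) :=
  {φ | ∃ a : PAtom S, a.p ∈ progPreds P ∧ (∀ i, (a.args i).isNameOf (progFuncs P)) ∧
        φ = Formula.imp a.toFormula (Formula.box a.toFormula)}

def ruleEmb {S : Sig} (emb : Rule S → Formula S) (P : Program S) : Set (Formula S) :=
  {φ | ∃ r ∈ P, φ = emb r}

def tauHP {S : Sig} (P : Program S) : Set (Formula S) := ruleEmb embHP P ∪ UNAax P
def tauEB {S : Sig} (P : Program S) : Set (Formula S) := ruleEmb embEB P ∪ UNAax P
def tauEH {S : Sig} (P : Program S) : Set (Formula S) := ruleEmb embEH P ∪ UNAax P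
def tauHPv {S : Sig} (P : Program S) : Set (Formula S) := ruleEmb embHP P ∪ PIAax P ∪ UNAax P
def tauEBv {S : Sig} (P : Program S) : Set (Formula S) := ruleEmb embEB P ∪ PIAax P ∪ UNAax P
def tauEHv {S : Sig} (P : Program S) : Set (Formula S) := ruleEmb embEH P ∪ UNAax P
def tauHPminus {S : Sig} (P : Program S) : Set (Formula S) := ruleEmb embHP P
def tauEHvminus {S : Sig} (P : Program S) : Set (Formula S) := ruleEmb embEH P

/-! ## Grounding and stable models -/

/-- The grounding of `P`: all ground instantiations of rules of `P`
obtained by replacing variables with names of `Σ_P`. -/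
def grP {S : Sig} (P : Program S) : Program S :=
  {r' | ∃ r ∈ P, ∃ σ : ℕ → Term S,
        (∀ x, r.hasVar x → (σ x).isNameOf (progFuncs P)) ∧ r' = Rule.applySubst σ r}

/-- A Herbrand interpretation: a set of ground atomic formulas. -/
def HerbrandI {S : Sig} (M : Set (Formula S)) : Prop :=
  ∀ φ ∈ M, φ.isAtomic ∧ φ.isGround

/-- `M` is a Herbrand model of the positive ground program `Q` (relative to the
names of `Σ_P`): rules are satisfied and `t = t ∈ M` for every name `t`. -/
def HerbrandModelOf {S : Sig} (P Q : Program S) (M : Set (Formula S)) : Prop :=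
  HerbrandI M ∧
  (∀ r ∈ Q, (∀ b ∈ r.pos, PAtom.toFormula b ∈ M) → ∃ h ∈ r.head, PAtom.toFormula h ∈ M) ∧
  (∀ t : Term S, t.isNameOf (progFuncs P) → Formula.eq t t ∈ M)

/-- The Gelfond–Lifschitz reduct of `gr(P)` with respect to `M`. -/
def reduct {S : Sig} (P : Program S) (M : Set (Formula S)) : Program S :=
  {r' | ∃ r ∈ grP P, (∀ c ∈ r.neg, PAtom.toFormula c ∉ M) ∧
        r' = ⟨r.head, r.pos, [], r.vars⟩}

/-- `M` is a stable model of `P`: a minimal Herbrand model of the reduct of `gr(P)` w.r.t. `M`. -/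
def isStableModel {S : Sig} (P : Program S) (M : Set (Formula S)) : Prop :=
  HerbrandModelOf P (reduct P M) M ∧
  ∀ M', M' ⊆ M → HerbrandModelOf P (reduct P M) M' → M' = M

/-! ## First-order theories and classes thereof -/

/-- An FO theory: a set of objective sentences. -/
def FOTheory {S : Sig} (Φ : Set (Formula S)) : Prop :=
  ∀ φ ∈ Φ, φ.isObjective ∧ φ.closed

def theoryFuncs {S : Sig} (Φ : Set (Formula S)) : Set S.Func := {f | ∃ φ ∈ Φ, f ∈ φ.funcs}
def theoryPreds {S : Sig} (Φ : Set (Formula S)) : Set S.Pred := {q | ∃ φ ∈ Φ, q ∈ φ.preds}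

/-- The ambient signature is exactly the union of the signatures of `Φ` and `P`. -/
def CoverSig {S : Sig} (Φ : Set (Formula S)) (P : Program S) : Prop :=
  (∀ f : S.Func, f ∈ theoryFuncs Φ ∪ progFuncs P) ∧
  (∀ q : S.Pred, q ∈ theoryPreds Φ ∪ progPreds P)

def exClosure {S : Sig} (ys : List ℕ) (φ : Formula S) : Formula S := ys.foldr Formula.ex φ

/-- A Horn sentence `(∀)(b₁ ∧ … ∧ b_n ⊃ h)` with atomic `b_i`, `h`
(the consequent `h` may be absent). -/
def isHornSentence {S : Sig} (φ : Formula S) : Prop :=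
  ∃ (vs : List ℕ) (bs : List (Formula S)),
    (∀ b ∈ bs, b.isAtomic) ∧
    ((∃ h : Formula S, h.isAtomic ∧ φ = uclosure vs (impOf bs h)) ∨
     (∃ b rest, bs = b :: rest ∧ φ = uclosure vs (Formula.not (andAll b rest))))

def HornTheory {S : Sig} (Φ : Set (Formula S)) : Prop :=
  FOTheory Φ ∧ ∀ φ ∈ Φ, isHornSentence φ

/-- A generalized Horn sentence `(∀)(b₁ ∧ … ∧ b_n ⊃ ∃ȳ.h)` with atomic `b_i`, `h`,
the variables `ȳ` occurring only in `h` (the consequent may be absent). -/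
def isGHornSentence {S : Sig} (φ : Formula S) : Prop :=
  ∃ (vs : List ℕ) (bs : List (Formula S)),
    (∀ b ∈ bs, b.isAtomic) ∧
    ((∃ (ys : List ℕ) (h : Formula S), h.isAtomic ∧
        (∀ y ∈ ys, ∀ b ∈ bs, ¬ b.freeIn y) ∧
        φ = uclosure vs (impOf bs (exClosure ys h))) ∨
     (∃ b rest, bs = b :: rest ∧ φ = uclosure vs (Formula.not (andAll b rest))))

def GHornTheory {S : Sig} (Φ : Set (Formula S)) : Prop :=
  FOTheory Φ ∧ ∀ φ ∈ Φ, isGHornSentence φ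

def PropTheory {S : Sig} (Φ : Set (Formula S)) : Prop :=
  FOTheory Φ ∧ ∀ φ ∈ Φ, φ.isPropositional


namespace Aux17

variable {S : Sig}

def G (α : Formula S) : Prop := α.isGround ∧ α.isAtomic

def Tr (w : Interp S) (α : Formula S) : Prop := Sat Sem.any w ∅ α (fun _ => w.dflt)

theorem eval_ground (w : Interp S) (B B' : ℕ → w.U) (t : Term S) (h : t.isGround) :
    t.eval w B = t.eval w B' := by
  induction t with
  | var x => exact h.elim
  | func f ts ih =>
    simp only [Term.eval]
    congr 1
    funext i
    exact ih i (h i)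

theorem subst_ground (β : ℕ → Option (Term S)) (t : Term S) (h : t.isGround) :
    t.subst β = t := by
  induction t with
  | var x => exact h.elim
  | func f ts ih =>
    simp only [Term.subst]
    congr 1
    funext i
    exact ih i (h i)

theorem hasVar_ground (x : ℕ) (t : Term S) (h : t.isGround) : ¬ t.hasVar x := by
  induction t with
  | var x => exact h.elim
  | func f ts ih =>
    rintro ⟨i, hi⟩
    exact ih i (h i) hi

theorem sat_G (w : Interp S) (Γ : Set (Formula S)) (α : Formula S) (h : G α) (B : ℕ → w.U) :
    Sat Sem.any w Γ α B ↔ Tr w α := by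
  obtain ⟨hg, ha⟩ := h
  cases α with
  | atom p ts =>
    simp only [Tr, Sat]
    have : (fun i => (ts i).eval w B) = fun i => (ts i).eval w (fun _ => w.dflt) := by
      funext i
      exact eval_ground w _ _ _ (hg i)
    rw [this]
  | eq t₁ t₂ =>
    simp only [Tr, Sat]
    rw [eval_ground w B (fun _ => w.dflt) t₁ hg.1, eval_ground w B (fun _ => w.dflt) t₂ hg.2]
  | not φ => exact ha.elim
  | and φ ψ => exact ha.elim
  | ex x φ => exact ha.elim
  | box φ => exact ha.elim

theorem substF_G (β : ℕ → Option (Term S)) (α : Formula S) (h : G α) : α.subst β = α := by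
  obtain ⟨hg, ha⟩ := h
  cases α with
  | atom p ts =>
    simp only [Formula.subst]
    congr 1
    funext i
    exact subst_ground _ _ (hg i)
  | eq t₁ t₂ =>
    simp only [Formula.subst]
    rw [subst_ground _ _ hg.1, subst_ground _ _ hg.2]
  | not φ => exact ha.elim
  | and φ ψ => exact ha.elim
  | ex x φ => exact ha.elim
  | box φ => exact ha.elim

theorem closed_G (α : Formula S) (h : G α) : α.closed := by
  obtain ⟨hg, ha⟩ := h
  intro x
  cases α with
  | atom p ts =>
    rintro ⟨i, hi⟩
    exact hasVar_ground _ _ (hg i) hi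
  | eq t₁ t₂ =>
    rintro (hi | hi)
    · exact hasVar_ground _ _ hg.1 hi
    · exact hasVar_ground _ _ hg.2 hi
  | not φ => exact ha.elim
  | and φ ψ => exact ha.elim
  | ex x φ => exact ha.elim
  | box φ => exact ha.elim

theorem exists_assoc (w : Interp S) (B : ℕ → w.U) : ∃ β, Assoc w B β := by
  classical
  refine ⟨fun x => if h : IsNamed w (B x) then some h.choose else none, fun x => ⟨?_, ?_⟩⟩
  · intro h
    simp [h]
  · intro t ht
    by_cases h : IsNamed w (B x)
    · simp only [h, dif_pos, Option.some.injEq] at ht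
      rw [← ht]
      exact h.choose_spec
    · simp [h] at ht

theorem sat_box (w : Interp S) (Γ : Set (Formula S)) (α : Formula S) (h : G α) (B : ℕ → w.U) :
    Sat Sem.any w Γ (Formula.box α) B ↔ α ∈ Γ := by
  simp only [Sat, substF_G _ _ h]
  constructor
  · rintro ⟨_, _, _, h⟩
    exact h
  · intro hm
    obtain ⟨β, hβ⟩ := exists_assoc w B
    exact ⟨β, hβ, closed_G _ h, hm⟩

/-! ### connectives -/

theorem sat_andAll (w : Interp S) (Γ : Set (Formula S)) (B : ℕ → w.U) (l : List (Formula S)) :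
    ∀ φ, Sat Sem.any w Γ (andAll φ l) B ↔ ∀ ψ ∈ φ :: l, Sat Sem.any w Γ ψ B := by
  induction l with
  | nil => intro φ; simp [andAll]
  | cons a l ih =>
    intro φ
    simp only [andAll, ih, List.forall_mem_cons, Sat]
    tauto

theorem sat_orAll (w : Interp S) (Γ : Set (Formula S)) (B : ℕ → w.U) (l : List (Formula S)) :
    ∀ φ, Sat Sem.any w Γ (orAll φ l) B ↔ ∃ ψ ∈ φ :: l, Sat Sem.any w Γ ψ B := by
  induction l with
  | nil => intro φ; simp [orAll]
  | cons a l ih =>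
    intro φ
    simp only [orAll, ih, List.exists_mem_cons_iff, Sat, Formula.or]
    tauto

theorem sat_impOf (w : Interp S) (Γ : Set (Formula S)) (B : ℕ → w.U) (l : List (Formula S))
    (c : Formula S) :
    Sat Sem.any w Γ (impOf l c) B ↔
      ((∀ ψ ∈ l, Sat Sem.any w Γ ψ B) → Sat Sem.any w Γ c B) := by
  cases l with
  | nil => simp [impOf]
  | cons a l =>
    simp only [impOf, Formula.imp, Sat, sat_andAll]
    tauto

theorem sat_disjOf (w : Interp S) (Γ : Set (Formula S)) (B : ℕ → w.U) (l : List (Formula S))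
    (hl : l ≠ []) :
    Sat Sem.any w Γ (disjOf l) B ↔ ∃ ψ ∈ l, Sat Sem.any w Γ ψ B := by
  cases l with
  | nil => exact (hl rfl).elim
  | cons a l => simp only [disjOf, sat_orAll]

theorem sat_imp (w : Interp S) (Γ : Set (Formula S)) (B : ℕ → w.U) (φ ψ : Formula S) :
    Sat Sem.any w Γ (Formula.imp φ ψ) B ↔ (Sat Sem.any w Γ φ B → Sat Sem.any w Γ ψ B) := by
  simp only [Formula.imp, Sat]
  tauto

/-! ### modal depth, existence of expansions -/

def depth : Formula S → ℕ
  | .atom _ _ => 0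
  | .eq _ _ => 0
  | .not φ => depth φ
  | .and φ ψ => max (depth φ) (depth ψ)
  | .ex _ φ => depth φ
  | .box φ => depth φ + 1

theorem depth_subst (φ : Formula S) : ∀ β, depth (φ.subst β) = depth φ := by
  induction φ <;> intro β <;> simp_all [Formula.subst, depth]

theorem sat_congr (w : Interp S) (Γ Γ' : Set (Formula S)) (n : ℕ)
    (hΓ : ∀ ψ, depth ψ < n → (ψ ∈ Γ ↔ ψ ∈ Γ')) (φ : Formula S) :
    depth φ ≤ n → ∀ B, (Sat Sem.any w Γ φ B ↔ Sat Sem.any w Γ' φ B) := by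
  induction φ with
  | atom p ts => intro _ B; simp [Sat]
  | eq t₁ t₂ => intro _ B; simp [Sat]
  | not φ ih => intro h B; simp only [Sat, ih h]
  | and φ ψ ih1 ih2 =>
    intro h B
    simp only [depth, max_le_iff] at h
    simp only [Sat, ih1 h.1, ih2 h.2]
  | ex x φ ih => intro h B; simp only [Sat]; exact exists_congr fun u => ih h _
  | box φ ih =>
    intro h B
    simp only [depth] at h
    simp only [Sat]
    refine exists_congr fun β => ?_
    rw [hΓ (φ.subst β) (by rw [depth_subst]; omega)]

theorem sat_obj (w : Interp S) (Γ Γ' : Set (Formula S)) (φ : Formula S) (h : φ.isObjective)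
    (B : ℕ → w.U) : Sat Sem.any w Γ φ B ↔ Sat Sem.any w Γ' φ B := by
  have hd : depth φ ≤ 0 := by
    induction φ with
    | atom p ts => simp [depth]
    | eq t₁ t₂ => simp [depth]
    | not φ ih => exact ih h
    | and φ ψ ih1 ih2 => exact max_le (ih1 h.1) (ih2 h.2)
    | ex x φ ih => exact ih h
    | box φ ih => exact h.elim
  exact sat_congr w Γ Γ' 0 (fun _ h => absurd h (by omega)) φ hd B

def Tn (K : Interp S → Prop) : ℕ → Set (Formula S)
  | 0 => ∅
  | n + 1 => {φ | ∀ w, K w → ModelsF Sem.any w (Tn K n) φ}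

def TT (K : Interp S → Prop) : Set (Formula S) :=
  {φ | ∀ w, K w → ModelsF Sem.any w (Tn K (depth φ)) φ}

theorem Tn_agree (K : Interp S → Prop) (n : ℕ) :
    ∀ ψ, depth ψ < n → (ψ ∈ Tn K n ↔ ψ ∈ TT K) := by
  induction n using Nat.strong_induction_on with
  | _ n ih =>
    intro ψ hψ
    cases n with
    | zero => omega
    | succ n =>
      simp only [Tn, TT, Set.mem_setOf_eq, ModelsF]
      refine forall_congr' fun w => imp_congr_right fun _ => forall_congr' fun B => ?_
      rw [sat_congr w _ _ n (ih n (by omega)) ψ (by omega),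
        sat_congr w _ _ _ (ih (depth ψ) hψ) ψ le_rfl]

theorem mem_TT (K : Interp S → Prop) (φ : Formula S) :
    φ ∈ TT K ↔ ∀ w, K w → ModelsF Sem.any w (TT K) φ := by
  change (∀ w, K w → ModelsF Sem.any w (Tn K (depth φ)) φ) ↔ _
  refine forall_congr' fun w => imp_congr_right fun _ => forall_congr' fun B => ?_
  exact sat_congr w _ _ _ (Tn_agree K _) φ le_rfl B

/-! ### products -/

def prodI {ι : Type} (w : ι → Interp S) : Interp S where
  U := ∀ i, (w i).U
  nonempty := ⟨fun i => (w i).dflt⟩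
  interpF f a := fun i => (w i).interpF f (fun k => a k i)
  interpP p a := ∀ i, (w i).interpP p (fun k => a k i)

theorem eval_prod {ι : Type} (w : ι → Interp S) (B : ℕ → (prodI w).U) (t : Term S) (i : ι) :
    t.eval (prodI w) B i = t.eval (w i) (fun x => B x i) := by
  induction t with
  | var x => rfl
  | func f ts ih =>
    simp only [Term.eval]
    simp only [prodI]
    congr 1
    funext k
    exact ih k

theorem sat_prod_atomic {ι : Type} (w : ι → Interp S) (Γ : Set (Formula S)) (α : Formula S)
    (ha : α.isAtomic) (B : ℕ → (prodI w).U) :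
    Sat Sem.any (prodI w) Γ α B ↔ ∀ i, Sat Sem.any (w i) Γ α (fun x => B x i) := by
  cases α with
  | atom p ts =>
    simp only [Sat, ← eval_prod]
    rfl
  | eq t₁ t₂ =>
    simp only [Sat, ← eval_prod]
    exact funext_iff
  | not φ => exact ha.elim
  | and φ ψ => exact ha.elim
  | ex x φ => exact ha.elim
  | box φ => exact ha.elim

theorem Tr_prod {ι : Type} (w : ι → Interp S) (α : Formula S) (h : G α) :
    Tr (prodI w) α ↔ ∀ i, Tr (w i) α := by
  rw [Tr, sat_prod_atomic w _ _ h.2]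
  exact forall_congr' fun i => sat_G _ _ _ h _

def Pres {ι : Type} (w : ι → Interp S) (φ : Formula S) : Prop :=
  ∀ B : ℕ → (prodI w).U, (∀ i, Sat Sem.any (w i) ∅ φ (fun x => B x i)) →
    Sat Sem.any (prodI w) ∅ φ B

theorem upd_prod {ι : Type} (w : ι → Interp S) (B : ℕ → (prodI w).U) (x : ℕ) (u : (prodI w).U)
    (i : ι) : (fun y => Function.update B x u y i) =
      Function.update (fun y => B y i) x (u i) := by
  funext y
  by_cases h : y = x
  · subst h; simp
  · simp [Function.update_of_ne h]

theorem Pres_all {ι : Type} (w : ι → Interp S) (φ : Formula S) (x : ℕ) (h : Pres w φ) :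
    Pres w (Formula.all x φ) := by
  intro B hB
  simp only [Formula.all, Sat, not_exists, not_not] at hB ⊢
  intro u
  apply h
  intro i
  rw [upd_prod]
  exact hB i _

theorem Pres_ex {ι : Type} (w : ι → Interp S) (φ : Formula S) (x : ℕ) (h : Pres w φ) :
    Pres w (Formula.ex x φ) := by
  intro B hB
  simp only [Sat] at hB ⊢
  choose u hu using hB
  refine ⟨(u : (prodI w).U), h _ fun i => ?_⟩
  have e := upd_prod w B x u i
  exact e ▸ hu i

theorem Pres_uclosure {ι : Type} (w : ι → Interp S) (φ : Formula S) (vs : List ℕ)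
    (h : Pres w φ) : Pres w (uclosure vs φ) := by
  induction vs with
  | nil => exact h
  | cons x vs ih => exact Pres_all w _ x ih

theorem Pres_exClosure {ι : Type} (w : ι → Interp S) (φ : Formula S) (vs : List ℕ)
    (h : Pres w φ) : Pres w (exClosure vs φ) := by
  induction vs with
  | nil => exact h
  | cons x vs ih => exact Pres_ex w _ x ih

theorem Pres_gHorn {ι : Type} [hne : Nonempty ι] (w : ι → Interp S) (φ : Formula S)
    (h : isGHornSentence φ) : Pres w φ := by
  obtain ⟨vs, bs, hbs, (⟨ys, h, hh, -, rfl⟩ | ⟨b, rest, rfl, rfl⟩)⟩ := h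
  · apply Pres_uclosure
    intro B hB
    simp only [sat_impOf] at hB ⊢
    intro hb
    have hp : Pres w (exClosure ys h) := by
      apply Pres_exClosure
      intro B
      exact (sat_prod_atomic w _ _ hh B).2
    refine hp B fun i => hB i fun ψ hψ => ?_
    exact (sat_prod_atomic w _ _ (hbs ψ hψ) B).1 (hb ψ hψ) i
  · apply Pres_uclosure
    intro B hB
    simp only [Sat, sat_andAll] at hB ⊢
    intro hb
    obtain ⟨i⟩ := hne
    refine hB i fun ψ hψ => ?_
    exact (sat_prod_atomic w _ _ (hbs ψ hψ) B).1 (hb ψ hψ) i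

theorem prod_model {ι : Type} [Nonempty ι] (w : ι → Interp S) (Φ : Set (Formula S))
    (hΦ : GHornTheory Φ) (h : ∀ i, ModelsT Sem.any (w i) ∅ Φ) :
    ModelsT Sem.any (prodI w) ∅ Φ := by
  intro φ hφ B
  exact Pres_gHorn w φ (hΦ.2 φ hφ) B fun i => h i φ hφ _

/-! ### characterizations -/

def rHP (Γ : Set (Formula S)) (w : Interp S) (r : Rule S) : Prop :=
  (∀ b ∈ r.pos, Tr w b.toFormula) → (∀ c ∈ r.neg, c.toFormula ∉ Γ) →
    ∃ h ∈ r.head, Tr w h.toFormula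

def rEH (Γ : Set (Formula S)) (w : Interp S) (r : Rule S) : Prop :=
  (∀ b ∈ r.pos, Tr w b.toFormula ∧ b.toFormula ∈ Γ) → (∀ c ∈ r.neg, c.toFormula ∉ Γ) →
    ∃ h ∈ r.head, Tr w h.toFormula ∧ h.toFormula ∈ Γ

def cUNA (P : Program S) (Γ : Set (Formula S)) (w : Interp S) : Prop :=
  ∀ t₁ t₂ : Term S, t₁.isNameOf (progFuncs P) → t₂.isNameOf (progFuncs P) → t₁ ≠ t₂ →
    Formula.eq t₁ t₂ ∉ Γ → ¬ Tr w (Formula.eq t₁ t₂)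

def cPIA (P : Program S) (Γ : Set (Formula S)) (w : Interp S) : Prop :=
  ∀ a : PAtom S, a.p ∈ progPreds P → (∀ i, (a.args i).isNameOf (progFuncs P)) →
    Tr w a.toFormula → a.toFormula ∈ Γ

def CHP (pia : Prop) (Φ : Set (Formula S)) (P : Program S) (Γ : Set (Formula S))
    (w : Interp S) : Prop :=
  ModelsT Sem.any w ∅ Φ ∧ (∀ r ∈ P, rHP Γ w r) ∧ (pia → cPIA P Γ w) ∧ cUNA P Γ w

def CEH (Φ : Set (Formula S)) (P : Program S) (Γ : Set (Formula S)) (w : Interp S) : Prop :=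
  ModelsT Sem.any w ∅ Φ ∧ (∀ r ∈ P, rEH Γ w r) ∧ cUNA P Γ w

theorem G_atom (a : PAtom S) (h : a.isGround) : G a.toFormula := ⟨h, trivial⟩

theorem ground_of_name (F : Set S.Func) (t : Term S) (h : t.isNameOf F) : t.isGround := by
  induction t with
  | var x => exact h.elim
  | func f ts ih => exact fun i => ih i (h.2 i)

theorem name_of_ground (F : Set S.Func) (t : Term S) (h : t.isGround) (hF : t.funcs ⊆ F) :
    t.isNameOf F := by
  induction t with
  | var x => exact h.elim
  | func f ts ih =>
    refine ⟨hF (Set.mem_insert _ _), fun i => ih i (h i) ?_⟩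
    intro g hg
    exact hF (Set.mem_insert_of_mem _ (Set.mem_iUnion.2 ⟨i, hg⟩))

theorem models_rHP (w : Interp S) (Γ : Set (Formula S)) (r : Rule S) (hw : r.wf)
    (hg : r.isGround) : ModelsF Sem.any w Γ (embHP r) ↔ rHP Γ w r := by
  have key : ∀ B, Sat Sem.any w Γ (embHP r) B ↔ rHP Γ w r := by
    intro B
    have hgr : ∀ a ∈ r.atoms, G a.toFormula := fun a ha => G_atom a (hg.1 a ha)
    simp only [Rule.atoms, List.mem_append] at hgr
    rw [embHP, hg.2]
    simp only [uclosure, List.foldr_nil]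
    rw [sat_impOf, sat_disjOf _ _ _ _ (by simpa using hw.1)]
    simp only [bodyHP, List.mem_append, List.mem_map, or_imp, forall_and, forall_exists_index,
      and_imp, forall_apply_eq_imp_iff₂, exists_exists_and_eq_and, rHP, and_imp]
    refine imp_congr ?_ (imp_congr ?_ ?_)
    · exact forall₂_congr fun b hb => sat_G _ _ _ (hgr b (by tauto)) _
    · exact forall₂_congr fun b hb => not_congr (sat_box _ _ _ (hgr b (by tauto)) _)
    · exact exists_congr fun b => and_congr_right fun hb => sat_G _ _ _ (hgr b (by tauto)) _
  exact ⟨fun h => (key fun _ => w.dflt).1 (h _), fun h B => (key B).2 h⟩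

theorem models_rEH (w : Interp S) (Γ : Set (Formula S)) (r : Rule S) (hw : r.wf)
    (hg : r.isGround) : ModelsF Sem.any w Γ (embEH r) ↔ rEH Γ w r := by
  have key : ∀ B, Sat Sem.any w Γ (embEH r) B ↔ rEH Γ w r := by
    intro B
    have hgr : ∀ a ∈ r.atoms, G a.toFormula := fun a ha => G_atom a (hg.1 a ha)
    simp only [Rule.atoms, List.mem_append] at hgr
    rw [embEH, hg.2]
    simp only [uclosure, List.foldr_nil]
    rw [sat_impOf, sat_disjOf _ _ _ _ (by simpa using hw.1)]
    simp only [bodyE, List.mem_append, List.mem_map, or_imp, forall_and, forall_exists_index,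
      and_imp, forall_apply_eq_imp_iff₂, exists_exists_and_eq_and, rEH, and_imp]
    rw [← and_imp (a := ∀ b ∈ r.pos, Tr w b.toFormula), ← forall₂_and]
    refine imp_congr ?_ (imp_congr ?_ ?_)
    · exact forall₂_congr fun b hb => and_congr (sat_G _ _ _ (hgr b (by tauto)) _)
        (sat_box _ _ _ (hgr b (by tauto)) _)
    · exact forall₂_congr fun b hb => not_congr (sat_box _ _ _ (hgr b (by tauto)) _)
    · exact exists_congr fun b => and_congr_right fun hb =>
        and_congr (sat_G _ _ _ (hgr b (by tauto)) _) (sat_box _ _ _ (hgr b (by tauto)) _)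
  exact ⟨fun h => (key fun _ => w.dflt).1 (h _), fun h B => (key B).2 h⟩

theorem models_union (w : Interp S) (Γ A B : Set (Formula S)) :
    ModelsT Sem.any w Γ (A ∪ B) ↔ ModelsT Sem.any w Γ A ∧ ModelsT Sem.any w Γ B := by
  simp only [ModelsT, Set.mem_union, or_imp, forall_and]

theorem models_obj (w : Interp S) (Γ Φ : Set (Formula S)) (h : FOTheory Φ) :
    ModelsT Sem.any w Γ Φ ↔ ModelsT Sem.any w ∅ Φ :=
  forall₂_congr fun φ hφ => forall_congr' fun B => sat_obj w _ _ φ (h φ hφ).1 B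

theorem models_UNA (w : Interp S) (Γ : Set (Formula S)) (P : Program S) :
    ModelsT Sem.any w Γ (UNAax P) ↔ cUNA P Γ w := by
  have key : ∀ t₁ t₂ : Term S, t₁.isNameOf (progFuncs P) → t₂.isNameOf (progFuncs P) → ∀ B,
      (Sat Sem.any w Γ (Formula.imp (Formula.not (Formula.box (Formula.eq t₁ t₂)))
              (Formula.not (Formula.eq t₁ t₂))) B ↔
        (Formula.eq t₁ t₂ ∉ Γ → ¬ Tr w (Formula.eq t₁ t₂))) := by
    intro t₁ t₂ h1 h2 B
    have hG : G (Formula.eq t₁ t₂) := ⟨⟨ground_of_name _ _ h1, ground_of_name _ _ h2⟩, trivial⟩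
    rw [sat_imp, Sat, sat_box _ _ _ hG, Sat, sat_G _ _ _ hG]
  constructor
  · intro h t₁ t₂ h1 h2 hne
    exact (key t₁ t₂ h1 h2 _).1 (h _ ⟨t₁, t₂, h1, h2, hne, rfl⟩ fun _ => w.dflt)
  · rintro h _ ⟨t₁, t₂, h1, h2, hne, rfl⟩ B
    exact (key t₁ t₂ h1 h2 B).2 (h t₁ t₂ h1 h2 hne)

theorem models_PIA (w : Interp S) (Γ : Set (Formula S)) (P : Program S) :
    ModelsT Sem.any w Γ (PIAax P) ↔ cPIA P Γ w := by
  have key : ∀ a : PAtom S, (∀ i, (a.args i).isNameOf (progFuncs P)) → ∀ B,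
      (Sat Sem.any w Γ (Formula.imp a.toFormula (Formula.box a.toFormula)) B ↔
        (Tr w a.toFormula → a.toFormula ∈ Γ)) := by
    intro a ha B
    have hG : G a.toFormula := G_atom a fun i => ground_of_name _ _ (ha i)
    rw [sat_imp, sat_box _ _ _ hG, sat_G _ _ _ hG]
  constructor
  · intro h a h1 h2
    exact (key a h2 _).1 (h _ ⟨a, h1, h2, rfl⟩ fun _ => w.dflt)
  · rintro h _ ⟨a, h1, h2, rfl⟩ B
    exact (key a h2 B).2 (h a h1 h2)

theorem models_ruleHP (w : Interp S) (Γ : Set (Formula S)) (P : Program S) (hw : progWf P)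
    (hg : progGround P) :
    ModelsT Sem.any w Γ (ruleEmb embHP P) ↔ ∀ r ∈ P, rHP Γ w r := by
  constructor
  · intro h r hr
    exact (models_rHP w Γ r (hw r hr) (hg r hr)).1 (h _ ⟨r, hr, rfl⟩)
  · rintro h _ ⟨r, hr, rfl⟩
    exact (models_rHP w Γ r (hw r hr) (hg r hr)).2 (h r hr)

theorem models_ruleEH (w : Interp S) (Γ : Set (Formula S)) (P : Program S) (hw : progWf P)
    (hg : progGround P) :
    ModelsT Sem.any w Γ (ruleEmb embEH P) ↔ ∀ r ∈ P, rEH Γ w r := by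
  constructor
  · intro h r hr
    exact (models_rEH w Γ r (hw r hr) (hg r hr)).1 (h _ ⟨r, hr, rfl⟩)
  · rintro h _ ⟨r, hr, rfl⟩
    exact (models_rEH w Γ r (hw r hr) (hg r hr)).2 (h r hr)

theorem models_HPv (w : Interp S) (Γ Φ : Set (Formula S)) (P : Program S) (hΦ : FOTheory Φ)
    (hw : progWf P) (hg : progGround P) :
    ModelsT Sem.any w Γ (Φ ∪ tauHPv P) ↔ CHP True Φ P Γ w := by
  simp only [tauHPv, models_union, models_UNA, models_PIA, models_ruleHP w Γ P hw hg,
    models_obj w Γ Φ hΦ, CHP]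
  tauto

theorem models_HP (w : Interp S) (Γ Φ : Set (Formula S)) (P : Program S) (hΦ : FOTheory Φ)
    (hw : progWf P) (hg : progGround P) :
    ModelsT Sem.any w Γ (Φ ∪ tauHP P) ↔ CHP False Φ P Γ w := by
  simp only [tauHP, models_union, models_UNA, models_ruleHP w Γ P hw hg,
    models_obj w Γ Φ hΦ, CHP]
  tauto

theorem models_EH (w : Interp S) (Γ Φ : Set (Formula S)) (P : Program S) (hΦ : FOTheory Φ)
    (hw : progWf P) (hg : progGround P) :
    ModelsT Sem.any w Γ (Φ ∪ tauEH P) ↔ CEH Φ P Γ w := by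
  simp only [tauEH, models_union, models_UNA, models_ruleEH w Γ P hw hg,
    models_obj w Γ Φ hΦ, CEH]

/-! ### core -/

def Fix (C : Set (Formula S) → Interp S → Prop) (Γ : Set (Formula S)) : Prop :=
  ∀ α, G α → (α ∈ Γ ↔ ∀ w, C Γ w → Tr w α)

def OgaDet (C : Set (Formula S) → Interp S → Prop) : Prop :=
  ∀ Γ Γ', (∀ α, G α → (α ∈ Γ ↔ α ∈ Γ')) → ∀ w, C Γ w → C Γ' w

theorem oga_iff (T T' : Set (Formula S)) :
    ogaOf T = ogaOf T' ↔ ∀ α, G α → (α ∈ T ↔ α ∈ T') := by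
  have hobj : ∀ α : Formula S, α.isAtomic → α.isObjective := by
    intro α h
    cases α <;> first | exact trivial | exact h.elim
  constructor
  · intro h α hα
    have := Set.ext_iff.1 h α
    simp only [ogaOf, Set.mem_setOf_eq] at this
    have h1 := hobj α hα.2
    have h2 := hα.1
    have h3 := hα.2
    tauto
  · intro h
    ext α
    simp only [ogaOf, Set.mem_setOf_eq]
    have := h α
    simp only [G] at this
    tauto

theorem fix_of_stable (Ψ : Set (Formula S)) (C : Set (Formula S) → Interp S → Prop)
    (hC : ∀ w Γ, ModelsT Sem.any w Γ Ψ ↔ C Γ w) (T : Set (Formula S))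
    (hT : StableExp Sem.any Ψ T) : Fix C T := by
  intro α hα
  have h1 : α ∈ T ↔ Entails Sem.any Ψ T α := by
    conv_lhs => rw [hT]
    rfl
  rw [h1]
  refine forall_congr' fun w => ?_
  rw [hC]
  refine imp_congr_right fun _ => ?_
  exact ⟨fun h => (sat_G w T α hα _).1 (h fun _ => w.dflt), fun h B => (sat_G w T α hα B).2 h⟩

theorem stable_of_fix (Ψ : Set (Formula S)) (C : Set (Formula S) → Interp S → Prop)
    (hC : ∀ w Γ, ModelsT Sem.any w Γ Ψ ↔ C Γ w) (hdet : OgaDet C) (T : Set (Formula S))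
    (hT : Fix C T) : ∃ T', StableExp Sem.any Ψ T' ∧ ogaOf T = ogaOf T' := by
  have hag : ∀ α, G α → (α ∈ T ↔ α ∈ TT (C T)) := by
    intro α hα
    rw [hT α hα, mem_TT]
    refine forall_congr' fun w => imp_congr_right fun _ => ?_
    exact ⟨fun h B => (sat_G w _ α hα B).2 h, fun h => (sat_G w _ α hα _).1 (h fun _ => w.dflt)⟩
  refine ⟨TT (C T), ?_, (oga_iff _ _).2 hag⟩
  ext φ
  rw [mem_TT]
  refine forall_congr' fun w => ?_
  rw [hC]
  exact imp_congr_left ⟨hdet _ _ hag w, hdet _ _ (fun α hα => (hag α hα).symm) w⟩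

theorem equiv_of_fix (Ψ₁ Ψ₂ : Set (Formula S)) (C₁ C₂ : Set (Formula S) → Interp S → Prop)
    (h1 : ∀ w Γ, ModelsT Sem.any w Γ Ψ₁ ↔ C₁ Γ w) (h2 : ∀ w Γ, ModelsT Sem.any w Γ Ψ₂ ↔ C₂ Γ w)
    (d1 : OgaDet C₁) (d2 : OgaDet C₂) (h : ∀ T, Fix C₁ T ↔ Fix C₂ T) :
    ExpEquivSel Sem.any ogaOf Ψ₁ Ψ₂ := by
  constructor
  · intro T hT
    exact stable_of_fix Ψ₂ C₂ h2 d2 T ((h T).1 (fix_of_stable Ψ₁ C₁ h1 T hT))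
  · intro T hT
    obtain ⟨T', a, b⟩ := stable_of_fix Ψ₁ C₁ h1 d1 T ((h T).2 (fix_of_stable Ψ₂ C₂ h2 T hT))
    exact ⟨T', a, b.symm⟩

theorem det_UNA (P : Program S) (Γ Γ' : Set (Formula S)) (h : ∀ α, G α → (α ∈ Γ ↔ α ∈ Γ'))
    (w : Interp S) (hu : cUNA P Γ w) : cUNA P Γ' w := by
  intro t₁ t₂ h1 h2 hne hn
  refine hu t₁ t₂ h1 h2 hne ?_
  rwa [h (Formula.eq t₁ t₂) ⟨⟨ground_of_name _ _ h1, ground_of_name _ _ h2⟩, trivial⟩]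

theorem det_HP (pia : Prop) (Φ : Set (Formula S)) (P : Program S) (hg : progGround P) :
    OgaDet (CHP pia Φ P) := by
  rintro Γ Γ' h w ⟨a, b, c, d⟩
  refine ⟨a, ?_, ?_, det_UNA P Γ Γ' h w d⟩
  · intro r hr hp hn
    refine b r hr hp fun c hc => ?_
    rw [h _ (G_atom c ((hg r hr).1 c (by simp [Rule.atoms, hc])))]
    exact hn c hc
  · intro hp a h1 h2 h3
    rw [← h _ (G_atom a fun i => ground_of_name _ _ (h2 i))]
    exact c hp a h1 h2 h3

theorem det_EH (Φ : Set (Formula S)) (P : Program S) (hg : progGround P) :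
    OgaDet (CEH Φ P) := by
  rintro Γ Γ' h w ⟨a, b, d⟩
  refine ⟨a, ?_, det_UNA P Γ Γ' h w d⟩
  intro r hr hp hn
  have hG : ∀ c ∈ r.atoms, (c.toFormula ∈ Γ ↔ c.toFormula ∈ Γ') :=
    fun c hc => h _ (G_atom c ((hg r hr).1 c hc))
  obtain ⟨x, hx, hx1, hx2⟩ := b r hr
    (fun b hb => ⟨(hp b hb).1, (hG b (by simp [Rule.atoms, hb])).2 (hp b hb).2⟩)
    (fun c hc => by rw [hG c (by simp [Rule.atoms, hc])]; exact hn c hc)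
  exact ⟨x, hx, hx1, (hG x (by simp [Rule.atoms, hx])).1 hx2⟩

/-- Combine a model `w` with countermodels for every ground atom outside `Γ`. -/
theorem exists_prod (Φ : Set (Formula S)) (hΦ : GHornTheory Φ)
    (C : Set (Formula S) → Interp S → Prop) (hC : ∀ Γ w, C Γ w → ModelsT Sem.any w ∅ Φ)
    (Γ : Set (Formula S)) (hF : Fix C Γ) (w : Interp S) (hw : ModelsT Sem.any w ∅ Φ) :
    ∃ w' : Interp S, ModelsT Sem.any w' ∅ Φ ∧
      ∀ α, G α → (Tr w' α ↔ Tr w α ∧ α ∈ Γ) := by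
  have hex : ∀ β : {β : Formula S // G β ∧ β ∉ Γ}, ∃ v, C Γ v ∧ ¬ Tr v β.1 := by
    rintro ⟨β, hβ, hn⟩
    rw [hF β hβ] at hn
    push Not at hn
    exact hn
  choose v hv1 hv2 using hex
  let fam : Option {β : Formula S // G β ∧ β ∉ Γ} → Interp S := fun o => o.elim w v
  refine ⟨prodI fam, prod_model fam Φ hΦ ?_, ?_⟩
  · rintro (_ | β)
    · exact hw
    · exact hC _ _ (hv1 β)
  · intro α hα
    rw [Tr_prod _ _ hα]
    constructor
    · intro h
      refine ⟨h none, ?_⟩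
      by_contra hn
      exact hv2 ⟨α, hα, hn⟩ (h (some ⟨α, hα, hn⟩))
    · rintro ⟨h1, h2⟩ (_ | β)
      · exact h1
      · exact (hF α hα).1 h2 _ (hv1 β)

theorem una_of (P : Program S) (Γ : Set (Formula S)) (w : Interp S)
    (h : ∀ α, G α → Tr w α → α ∈ Γ) : cUNA P Γ w := by
  intro t₁ t₂ h1 h2 _ hn ht
  exact hn (h _ ⟨⟨ground_of_name _ _ h1, ground_of_name _ _ h2⟩, trivial⟩ ht)

theorem core (pia : Prop) (Φ : Set (Formula S)) (hΦ : GHornTheory Φ) (P : Program S)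
    (hg : progGround P) (hn : pia ∨ progNormal P) (Γ : Set (Formula S)) :
    Fix (CHP pia Φ P) Γ ↔ Fix (CEH Φ P) Γ := by
  have hG : ∀ r ∈ P, ∀ a ∈ r.atoms, G a.toFormula := fun r hr a ha => G_atom a ((hg r hr).1 a ha)
  have hGh : ∀ r ∈ P, ∀ a ∈ r.head, G a.toFormula := fun r hr a ha =>
    hG r hr a (by simp [Rule.atoms, ha])
  have hGp : ∀ r ∈ P, ∀ a ∈ r.pos, G a.toFormula := fun r hr a ha =>
    hG r hr a (by simp [Rule.atoms, ha])
  -- from EH to HP on atoms inside Γ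
  have toHP : ∀ w w' : Interp S, CEH Φ P Γ w → ModelsT Sem.any w' ∅ Φ →
      (∀ α, G α → (Tr w' α ↔ Tr w α ∧ α ∈ Γ)) → CHP pia Φ P Γ w' := by
    rintro w w' ⟨_, h2, _⟩ hw' htr
    refine ⟨hw', ?_, ?_, una_of P Γ w' fun α hα h => ((htr α hα).1 h).2⟩
    · intro r hr hp hneg
      obtain ⟨x, hx, hx'⟩ := h2 r hr (fun b hb => (htr _ (hGp r hr b hb)).1 (hp b hb)) hneg
      exact ⟨x, hx, (htr _ (hGh r hr x hx)).2 hx'⟩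
    · intro _ a _ h2 h3
      exact ((htr _ (G_atom a fun i => ground_of_name _ _ (h2 i))).1 h3).2
  -- heads belong to Γ
  have headPIA : pia → ∀ w, CHP pia Φ P Γ w → ∀ r ∈ P, ∀ x ∈ r.head,
      Tr w x.toFormula → x.toFormula ∈ Γ := by
    intro hp w hw r hr x hx ht
    have hxa : x ∈ r.atoms := by simp [Rule.atoms, hx]
    refine hw.2.2.1 hp x ⟨r, hr, x, hxa, rfl⟩ (fun i => ?_) ht
    refine name_of_ground _ _ ((hg r hr).1 x hxa i) fun f hf => ?_
    exact ⟨r, hr, x, hxa, Set.mem_iUnion.2 ⟨i, hf⟩⟩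
  have hHPΦ : ∀ Γ w, CHP pia Φ P Γ w → ModelsT Sem.any w ∅ Φ := fun _ _ h => h.1
  have hEHΦ : ∀ Γ w, CEH Φ P Γ w → ModelsT Sem.any w ∅ Φ := fun _ _ h => h.1
  have single : progNormal P → ∀ r ∈ P, ∃ x, r.head = [x] := fun h r hr =>
    List.length_eq_one_iff.1 (h r hr)
  constructor
  · intro hF α hα
    rw [hF α hα]
    constructor
    · intro h w hw
      obtain ⟨w', hw', htr⟩ := exists_prod Φ hΦ _ hHPΦ Γ hF w hw.1
      exact ((htr α hα).1 (h w' (toHP w w' hw hw' htr))).1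
    · intro h w hw
      refine h w ⟨hw.1, ?_, hw.2.2.2⟩
      intro r hr hp hneg
      obtain ⟨x, hx, hxt⟩ := hw.2.1 r hr (fun b hb => (hp b hb).1) hneg
      refine ⟨x, hx, hxt, ?_⟩
      rcases hn with hn | hn
      · exact headPIA hn w hw r hr x hx hxt
      · rw [hF _ (hGh r hr x hx)]
        intro v hv
        obtain ⟨y, hy⟩ := single hn r hr
        obtain ⟨z, hz, hzt⟩ := hv.2.1 r hr
          (fun b hb => (hF _ (hGp r hr b hb)).1 (hp b hb).2 v hv) hneg
        rw [hy, List.mem_singleton] at hx hz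
        rw [hx, ← hz]
        exact hzt
  · intro hF α hα
    constructor
    · intro hαΓ w hw
      rcases hn with hn | hn
      · refine (hF α hα).1 hαΓ w ⟨hw.1, ?_, hw.2.2.2⟩
        intro r hr hp hneg
        obtain ⟨x, hx, hxt⟩ := hw.2.1 r hr (fun b hb => (hp b hb).1) hneg
        exact ⟨x, hx, hxt, headPIA hn w hw r hr x hx hxt⟩
      · obtain ⟨w', hw', htr⟩ := exists_prod Φ hΦ _ hEHΦ Γ hF w hw.1
        refine ((htr α hα).1 ((hF α hα).1 hαΓ w' ⟨hw', ?_,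
          una_of P Γ w' fun α hα h => ((htr α hα).1 h).2⟩)).1
        intro r hr hp hneg
        obtain ⟨y, hy⟩ := single hn r hr
        obtain ⟨x, hx, hxt⟩ := hw.2.1 r hr
          (fun b hb => ((htr _ (hGp r hr b hb)).1 (hp b hb).1).1) hneg
        have hxΓ : x.toFormula ∈ Γ := by
          rw [hF _ (hGh r hr x hx)]
          intro v hv
          obtain ⟨z, hz, hzt, _⟩ := hv.2.1 r hr
            (fun b hb => ⟨(hF _ (hGp r hr b hb)).1 (hp b hb).2 v hv, (hp b hb).2⟩) hneg
          rw [hy, List.mem_singleton] at hx hz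
          rw [hx, ← hz]
          exact hzt
        exact ⟨x, hx, (htr _ (hGh r hr x hx)).2 ⟨hxt, hxΓ⟩, hxΓ⟩
    · intro h
      by_contra hnα
      have : ∃ v, CEH Φ P Γ v ∧ ¬ Tr v α := by
        have hh := hnα
        rw [hF α hα] at hh
        push Not at hh
        exact hh
      obtain ⟨v, hv, _⟩ := this
      obtain ⟨w', hw', htr⟩ := exists_prod Φ hΦ _ hEHΦ Γ hF v hv.1
      exact hnα ((htr α hα).1 (h w' (toHP v w' hv hw' htr))).2

end Aux17

/-- For a generalized Horn theory `Φ`: for every ground disjunctive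
program `P`, `ι^∨_HP(Φ,P) ≡ᴱ_oga ι^∨_EH(Φ,P)`; and for every ground normal program
`P`, `ι_HP(Φ,P) ≡ᴱ_oga ι_EH(Φ,P)`. -/
theorem stmt17 {S : Sig} (Φ : Set (Formula S)) (hΦ : GHornTheory Φ) :
    (∀ P : Program S, progWf P → progGround P → goodSig P → CoverSig Φ P →
        ExpEquivSel Sem.any ogaOf (Φ ∪ tauHPv P) (Φ ∪ tauEHv P)) ∧
    (∀ P : Program S, progWf P → progNormal P → progGround P → goodSig P → CoverSig Φ P →
        ExpEquivSel Sem.any ogaOf (Φ ∪ tauHP P) (Φ ∪ tauEH P)) := by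
  constructor
  · intro P hw hg _ _
    exact Aux17.equiv_of_fix _ _ (Aux17.CHP True Φ P) (Aux17.CEH Φ P)
      (fun w Γ => Aux17.models_HPv w Γ Φ P hΦ.1 hw hg)
      (fun w Γ => Aux17.models_EH w Γ Φ P hΦ.1 hw hg)
      (Aux17.det_HP True Φ P hg) (Aux17.det_EH Φ P hg)
      (Aux17.core True Φ hΦ P hg (Or.inl trivial))
  · intro P hw hn hg _ _
    exact Aux17.equiv_of_fix _ _ (Aux17.CHP False Φ P) (Aux17.CEH Φ P)
      (fun w Γ => Aux17.models_HP w Γ Φ P hΦ.1 hw hg)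
      (fun w Γ => Aux17.models_EH w Γ Φ P hΦ.1 hw hg)
      (Aux17.det_HP False Φ P hg) (Aux17.det_EH Φ P hg)
      (Aux17.core False Φ hΦ P hg (Or.inr hn))
end

section
/- Let Φ be a propositional first-order theory. For every normal logic program P, ι_EB(Φ,P) ≡ᴱ_og ι_EH(Φ,P); and if P is moreover safe, then ι_EB(Φ,P) ≡ᴱ ι_EH(Φ,P), i.e., the two combinations have exactly the same stableᴱ expansions. -/
set_option autoImplicit false

section Helpers

variable {S : Sig}

theorem Term.h_eval_subst (w : Interp S) (B : ℕ → w.U) (σ : ℕ → Term S) (t : Term S) :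
    (t.subst (fun x => some (σ x))).eval w B = t.eval w (fun x => (σ x).eval w B) := by
  induction t with
  | var x => simp [Term.subst, Term.eval]
  | func f ts ih => simp only [Term.subst, Term.eval, ih]

theorem Term.h_eval_congr (w : Interp S) (B B' : ℕ → w.U) (t : Term S)
    (h : ∀ x, t.hasVar x → B x = B' x) : t.eval w B = t.eval w B' := by
  induction t with
  | var x => exact h x rfl
  | func f ts ih =>
    simp only [Term.eval]
    congr 1
    funext i
    exact ih i (fun x hx => h x ⟨i, hx⟩)

theorem Term.h_ground_noVar (t : Term S) (h : t.isGround) (x : ℕ) : ¬ t.hasVar x := by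
  induction t with
  | var y => exact h.elim
  | func f ts ih => rintro ⟨i, hi⟩; exact ih i (h i) hi

theorem Term.h_ground_of_noVar (t : Term S) (h : ∀ x, ¬ t.hasVar x) : t.isGround := by
  induction t with
  | var y => exact (h y rfl).elim
  | func f ts ih => exact fun i => ih i (fun x hx => h x ⟨i, hx⟩)

theorem Term.h_subst_congr (β β' : ℕ → Option (Term S)) (t : Term S)
    (h : ∀ x, t.hasVar x → β x = β' x) : t.subst β = t.subst β' := by
  induction t with
  | var x => simp only [Term.subst, h x rfl]
  | func f ts ih =>
    simp only [Term.subst]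
    congr 1
    funext i
    exact ih i (fun x hx => h x ⟨i, hx⟩)

theorem Term.h_subst_ground (β : ℕ → Option (Term S)) (t : Term S) (h : t.isGround) :
    t.subst β = t := by
  induction t with
  | var x => exact h.elim
  | func f ts ih =>
    simp only [Term.subst]
    congr 1
    funext i
    exact ih i (h i)

theorem Term.h_hasVar_subst (β : ℕ → Option (Term S)) (x : ℕ) (hx : β x = none) (t : Term S)
    (h : t.hasVar x) : (t.subst β).hasVar x := by
  induction t with
  | var y =>
    have : y = x := h
    subst this
    simp [Term.subst, hx, Term.hasVar]
  | func f ts ih => obtain ⟨i, hi⟩ := h; exact ⟨i, ih i hi⟩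

theorem Term.h_ground_subst (σ : ℕ → Term S) (t : Term S)
    (h : ∀ x, t.hasVar x → (σ x).isGround) : (t.subst (fun x => some (σ x))).isGround := by
  induction t with
  | var y => simpa [Term.subst] using h y rfl
  | func f ts ih => exact fun i => ih i (fun x hx => h x ⟨i, hx⟩)

theorem Term.h_eval_ground (w : Interp S) (B : ℕ → w.U) (t : Term S) (h : t.isGround) :
    t.eval w B = t.evalG w :=
  Term.h_eval_congr w _ _ t (fun x hx => (Term.h_ground_noVar t h x hx).elim)

theorem Term.h_isNameOf (F : Set S.Func) (hF : ∀ f, f ∈ F) (t : Term S) (h : t.isGround) :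
    t.isNameOf F := by
  induction t with
  | var y => exact h.elim
  | func f ts ih => exact ⟨hF f, fun i => ih i (h i)⟩

theorem Term.h_ground_of_isNameOf (F : Set S.Func) (t : Term S) (h : t.isNameOf F) :
    t.isGround := by
  induction t with
  | var y => exact h.elim
  | func f ts ih => exact fun i => ih i (h.2 i)

/-- Semantic form of a boxed atom. -/
def LAt (w : Interp S) (T : Set (Formula S)) (B : ℕ → w.U) (a : PAtom S) : Prop :=
  ∃ σ : ℕ → Term S, (∀ x, a.hasVar x → (σ x).isGround ∧ Term.evalG w (σ x) = B x) ∧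
    (a.substA σ).toFormula ∈ T

def ValA (w : Interp S) (B : ℕ → w.U) (a : PAtom S) : Prop :=
  w.interpP a.p (fun i => (a.args i).eval w B)

theorem h_substA_congr (a : PAtom S) (σ σ' : ℕ → Term S) (h : ∀ x, a.hasVar x → σ x = σ' x) :
    a.substA σ = a.substA σ' := by
  unfold PAtom.substA
  congr 1
  funext i
  exact Term.h_subst_congr _ _ _ (fun x hx => by rw [h x ⟨i, hx⟩])

theorem h_valA_subst (w : Interp S) (B : ℕ → w.U) (σ : ℕ → Term S) (a : PAtom S) :
    ValA w B (a.substA σ) ↔ ValA w (fun x => (σ x).eval w B) a := by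
  unfold ValA PAtom.substA
  simp only [Term.h_eval_subst]

theorem h_valA_congr (w : Interp S) (B B' : ℕ → w.U) (a : PAtom S)
    (h : ∀ x, a.hasVar x → B x = B' x) : ValA w B a ↔ ValA w B' a := by
  unfold ValA
  have : (fun i => (a.args i).eval w B) = (fun i => (a.args i).eval w B') := by
    funext i
    exact Term.h_eval_congr _ _ _ _ (fun x hx => h x ⟨i, hx⟩)
  rw [this]

theorem h_ground_og (a : PAtom S) (σ : ℕ → Term S) (h : ∀ x, a.hasVar x → (σ x).isGround) :
    (a.substA σ).toFormula.isObjective ∧ (a.substA σ).toFormula.isGround :=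
  ⟨trivial, fun i => Term.h_ground_subst _ _ (fun x hx => h x ⟨i, hx⟩)⟩

theorem h_sat_box (w : Interp S) (T : Set (Formula S)) (B : ℕ → w.U) (a : PAtom S) :
    Sat Sem.any w T (Formula.box a.toFormula) B ↔ LAt w T B a := by
  classical
  simp only [Sat]
  constructor
  · rintro ⟨β, hβ, hcl, hmem⟩
    have hsome : ∀ x, a.hasVar x → β x = some ((β x).getD (Term.var x)) := by
      rintro x ⟨i, hi⟩
      cases hx : β x with
      | some t => rfl
      | none => exact (hcl x ⟨i, Term.h_hasVar_subst β x hx _ hi⟩).elim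
    refine ⟨fun x => (β x).getD (Term.var x), fun x hx => (hβ x).2 _ (hsome x hx), ?_⟩
    have : (a.substA fun x => (β x).getD (Term.var x)).toFormula = a.toFormula.subst β := by
      unfold PAtom.substA PAtom.toFormula Formula.subst
      congr 1
      funext i
      exact Term.h_subst_congr _ _ _ (fun x hx => (hsome x ⟨i, hx⟩).symm)
    rw [this]; exact hmem
  · rintro ⟨σ, hσ, hmem⟩
    let β : ℕ → Option (Term S) := fun x =>
      if a.hasVar x then some (σ x) else
        if h : IsNamed w (B x) then some h.choose else none
    have heq : a.toFormula.subst β = (a.substA σ).toFormula := by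
      unfold PAtom.substA PAtom.toFormula Formula.subst
      congr 1
      funext i
      refine Term.h_subst_congr _ _ _ (fun x hx => ?_)
      have : a.hasVar x := ⟨i, hx⟩
      simp [β, this]
    refine ⟨β, ?_, ?_, ?_⟩
    · intro x
      by_cases hx : a.hasVar x
      · refine ⟨fun _ => by simp [β, hx], fun t ht => ?_⟩
        simp only [β, hx, if_true, Option.some.injEq] at ht
        subst ht; exact hσ x hx
      · by_cases hn : IsNamed w (B x)
        · refine ⟨fun _ => by simp [β, hx, hn], fun t ht => ?_⟩
          simp only [β, hx, if_false, hn, dif_pos, Option.some.injEq] at ht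
          subst ht; exact hn.choose_spec
        · refine ⟨fun h => (hn h).elim, fun t ht => ?_⟩
          simp [β, hx, hn] at ht
    · rw [heq]
      rintro x ⟨i, hi⟩
      exact Term.h_ground_noVar _ ((h_ground_og a σ (fun x hx => (hσ x hx).1)).2 i) x hi
    · rw [heq]; exact hmem

theorem h_sat_imp (X : Sem) (w : Interp S) (T : Set (Formula S)) (φ ψ : Formula S) (B : ℕ → w.U) :
    Sat X w T (Formula.imp φ ψ) B ↔ (Sat X w T φ B → Sat X w T ψ B) := by
  simp only [Formula.imp, Sat]; tauto

theorem h_sat_andAll (X : Sem) (w : Interp S) (T : Set (Formula S)) (l : List (Formula S))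
    (φ : Formula S) (B : ℕ → w.U) :
    Sat X w T (andAll φ l) B ↔ (Sat X w T φ B ∧ ∀ a ∈ l, Sat X w T a B) := by
  induction l generalizing φ with
  | nil => simp [andAll]
  | cons a l ih => simp [andAll, ih, Sat, and_assoc]

theorem h_sat_impOf (X : Sem) (w : Interp S) (T : Set (Formula S)) (l : List (Formula S))
    (φ : Formula S) (B : ℕ → w.U) :
    Sat X w T (impOf l φ) B ↔ ((∀ a ∈ l, Sat X w T a B) → Sat X w T φ B) := by
  cases l with
  | nil => simp [impOf]
  | cons a l => simp [impOf, h_sat_imp, h_sat_andAll]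

theorem h_models_uclosure (X : Sem) (w : Interp S) (T : Set (Formula S)) (vs : List ℕ)
    (φ : Formula S) : ModelsF X w T (uclosure vs φ) ↔ ModelsF X w T φ := by
  induction vs with
  | nil => rfl
  | cons x vs ih =>
    rw [← ih]
    change (∀ B, Sat X w T (Formula.all x (uclosure vs φ)) B) ↔ _
    simp only [Formula.all, Sat, not_exists, not_not]
    constructor
    · intro h B
      have := h B (B x)
      rwa [Function.update_eq_self] at this
    · intro h B u
      exact h _

/-- Semantic form of a rule; `e = true` for EH. -/
def Rul (e : Bool) (w : Interp S) (T : Set (Formula S)) (r : Rule S) (h : PAtom S) : Prop :=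
  ∀ B : ℕ → w.U, (∀ b ∈ r.pos, ValA w B b ∧ LAt w T B b) → (∀ c ∈ r.neg, ¬ LAt w T B c) →
    ValA w B h ∧ (e = true → LAt w T B h)

def UN (w : Interp S) (T : Set (Formula S)) : Prop :=
  ∀ t₁ t₂ : Term S, t₁.isGround → t₂.isGround → t₁ ≠ t₂ → t₁.evalG w = t₂.evalG w →
    Formula.eq t₁ t₂ ∈ T

def PsiE (e : Bool) (Φ : Set (Formula S)) (P : Program S) : Set (Formula S) :=
  Φ ∪ (if e then tauEH P else tauEB P)

def MM (e : Bool) (Φ : Set (Formula S)) (P : Program S) (w : Interp S) (T : Set (Formula S)) :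
    Prop :=
  ModelsT Sem.any w T Φ ∧ (∀ r ∈ P, ∀ h, r.head = [h] → Rul e w T r h) ∧ UN w T

theorem h_bodyE (w : Interp S) (T : Set (Formula S)) (r : Rule S) (B : ℕ → w.U) :
    (∀ a ∈ bodyE r, Sat Sem.any w T a B) ↔
    (∀ b ∈ r.pos, ValA w B b ∧ LAt w T B b) ∧ (∀ c ∈ r.neg, ¬ LAt w T B c) := by
  simp only [bodyE, List.mem_append, List.mem_map, or_imp, forall_and, forall_exists_index,
    and_imp, forall_apply_eq_imp_iff₂]
  have e1 : ∀ b : PAtom S, Sat Sem.any w T (Formula.and b.toFormula (Formula.box b.toFormula)) B ↔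
      ValA w B b ∧ LAt w T B b := by
    intro b; rw [← h_sat_box]; rfl
  have e2 : ∀ b : PAtom S, Sat Sem.any w T (Formula.not (Formula.box b.toFormula)) B ↔
      ¬ LAt w T B b := by
    intro b; rw [← h_sat_box]; rfl
  simp only [e1, e2, forall_and]

theorem h_models_EB (w : Interp S) (T : Set (Formula S)) (r : Rule S) (h : PAtom S)
    (hh : r.head = [h]) : ModelsF Sem.any w T (embEB r) ↔ Rul false w T r h := by
  unfold embEB
  rw [h_models_uclosure]
  unfold ModelsF Rul
  refine forall_congr' fun B => ?_
  rw [h_sat_impOf, h_bodyE, hh, and_imp]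
  simp [disjOf, orAll, Sat, PAtom.toFormula, ValA]

theorem h_models_EH (w : Interp S) (T : Set (Formula S)) (r : Rule S) (h : PAtom S)
    (hh : r.head = [h]) : ModelsF Sem.any w T (embEH r) ↔ Rul true w T r h := by
  unfold embEH
  rw [h_models_uclosure]
  unfold ModelsF Rul
  refine forall_congr' fun B => ?_
  rw [h_sat_impOf, h_bodyE, hh, and_imp, ← h_sat_box]
  simp [disjOf, orAll, Sat, PAtom.toFormula, ValA]

theorem h_models_UNA (w : Interp S) (T : Set (Formula S)) (P : Program S)
    (hF : ∀ f, f ∈ progFuncs P) : ModelsT Sem.any w T (UNAax P) ↔ UN w T := by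
  classical
  have key : ∀ t₁ t₂ : Term S, t₁.isGround → t₂.isGround → ∀ B : ℕ → w.U,
      (Sat Sem.any w T (Formula.imp (Formula.not (Formula.box (Formula.eq t₁ t₂)))
              (Formula.not (Formula.eq t₁ t₂))) B ↔
        (t₁.evalG w = t₂.evalG w → Formula.eq t₁ t₂ ∈ T)) := by
    intro t₁ t₂ h1 h2 B
    have hb : Sat Sem.any w T (Formula.box (Formula.eq t₁ t₂)) B ↔ Formula.eq t₁ t₂ ∈ T := by
      simp only [Sat, Formula.subst, Term.h_subst_ground _ _ h1, Term.h_subst_ground _ _ h2]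
      constructor
      · rintro ⟨_, _, _, h⟩; exact h
      · intro h
        refine ⟨fun x => if hn : IsNamed w (B x) then some hn.choose else none, ?_, ?_, h⟩
        · intro x
          by_cases hn : IsNamed w (B x)
          · refine ⟨fun _ => by simp [hn], fun t ht => ?_⟩
            simp only [hn, dif_pos, Option.some.injEq] at ht
            subst ht; exact hn.choose_spec
          · refine ⟨fun h => (hn h).elim, fun t ht => ?_⟩
            simp [hn] at ht
        · rintro x (hx | hx)
          · exact Term.h_ground_noVar _ h1 x hx
          · exact Term.h_ground_noVar _ h2 x hx
    rw [h_sat_imp]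
    have e1 : Sat Sem.any w T (Formula.not (Formula.box (Formula.eq t₁ t₂))) B ↔
      ¬ Sat Sem.any w T (Formula.box (Formula.eq t₁ t₂)) B := Iff.rfl
    have e2 : Sat Sem.any w T (Formula.not (Formula.eq t₁ t₂)) B ↔
      ¬ (t₁.evalG w = t₂.evalG w) := by
      rw [← Term.h_eval_ground w B t₁ h1, ← Term.h_eval_ground w B t₂ h2]; rfl
    rw [e1, e2, hb, not_imp_not]
  constructor
  · intro h t₁ t₂ h1 h2 hne
    exact (key t₁ t₂ h1 h2 (fun _ => w.dflt)).1 (h _ ⟨t₁, t₂, Term.h_isNameOf _ hF _ h1,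
      Term.h_isNameOf _ hF _ h2, hne, rfl⟩ _)
  · rintro h _ ⟨t₁, t₂, h1, h2, hne, rfl⟩ B
    have g1 := Term.h_ground_of_isNameOf _ _ h1
    have g2 := Term.h_ground_of_isNameOf _ _ h2
    exact (key t₁ t₂ g1 g2 B).2 (h t₁ t₂ g1 g2 hne)

theorem h_modelsT_union (X : Sem) (w : Interp S) (T A B : Set (Formula S)) :
    ModelsT X w T (A ∪ B) ↔ ModelsT X w T A ∧ ModelsT X w T B := by
  simp only [ModelsT, Set.mem_union, or_imp, forall_and]

theorem h_MM (e : Bool) (Φ : Set (Formula S)) (P : Program S) (hn : progNormal P)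
    (hF : ∀ f, f ∈ progFuncs P) (w : Interp S) (T : Set (Formula S)) :
    ModelsT Sem.any w T (PsiE e Φ P) ↔ MM e Φ P w T := by
  unfold PsiE MM
  rw [h_modelsT_union, ← h_models_UNA w T P hF]
  refine and_congr_right fun _ => ?_
  have hhead : ∀ r ∈ P, ∃ h, r.head = [h] := fun r hr => List.length_eq_one_iff.1 (hn r hr)
  cases e
  · simp only [tauEB, h_modelsT_union, Bool.false_eq_true, if_false]
    refine and_congr_left fun _ => ?_
    constructor
    · intro h r hr a ha; exact (h_models_EB w T r a ha).1 (h _ ⟨r, hr, rfl⟩)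
    · rintro h _ ⟨r, hr, rfl⟩
      obtain ⟨a, ha⟩ := hhead r hr
      exact (h_models_EB w T r a ha).2 (h r hr a ha)
  · simp only [tauEH, h_modelsT_union, if_true]
    refine and_congr_left fun _ => ?_
    constructor
    · intro h r hr a ha; exact (h_models_EH w T r a ha).1 (h _ ⟨r, hr, rfl⟩)
    · rintro h _ ⟨r, hr, rfl⟩
      obtain ⟨a, ha⟩ := hhead r hr
      exact (h_models_EH w T r a ha).2 (h r hr a ha)

/-- Propositional formulas only depend on the 0-ary predicates. -/
theorem h_sat_prop (w w' : Interp S) (T T' : Set (Formula S))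
    (hp : ∀ p, S.arP p = 0 → ∀ v v', w.interpP p v ↔ w'.interpP p v')
    (φ : Formula S) (hφ : φ.isPropositional) (B : ℕ → w.U) (B' : ℕ → w'.U) :
    Sat Sem.any w T φ B ↔ Sat Sem.any w' T' φ B' := by
  induction φ with
  | atom p ts => exact hp p hφ _ _
  | eq _ _ => exact hφ.elim
  | not φ ih => exact not_congr (ih hφ)
  | and φ ψ ih1 ih2 => exact and_congr (ih1 hφ.1) (ih2 hφ.2)
  | ex _ _ => exact hφ.elim
  | box _ => exact hφ.elim

theorem h_modelsT_prop (w w' : Interp S) (T T' Φ : Set (Formula S))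
    (hΦ : ∀ φ ∈ Φ, φ.isPropositional)
    (hp : ∀ p, S.arP p = 0 → ∀ v v', w.interpP p v ↔ w'.interpP p v')
    (h : ModelsT Sem.any w T Φ) : ModelsT Sem.any w' T' Φ :=
  fun φ hφ B' => (h_sat_prop w w' T T' hp φ (hΦ φ hφ) (fun _ => w.dflt) B').1 (h φ hφ _)

theorem h_arity0 (w : Interp S) (p : S.Pred) (hp : S.arP p = 0) (v v' : Fin (S.arP p) → w.U) :
    w.interpP p v ↔ w.interpP p v' := by
  have : v = v' := by
    funext i
    exact absurd i.2 (by omega)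
  rw [this]

theorem h_prop_funcs (φ : Formula S) (hφ : φ.isPropositional) : φ.funcs = ∅ := by
  induction φ with
  | atom p ts =>
    have : S.arP p = 0 := hφ
    simp only [Formula.funcs, Set.iUnion_eq_empty]
    intro i
    exact absurd i.2 (by omega)
  | eq _ _ => exact hφ.elim
  | not φ ih => exact ih hφ
  | and φ ψ ih1 ih2 => simp [Formula.funcs, ih1 hφ.1, ih2 hφ.2]
  | ex _ _ => exact hφ.elim
  | box _ => exact hφ.elim

/-- Closure of an expansion under replacing equal names in atoms. -/
theorem h_clo (Ψ T : Set (Formula S)) (hT : StableExp Sem.any Ψ T) (a : PAtom S)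
    (σ σ' : ℕ → Term S) (g : ∀ x, a.hasVar x → (σ x).isGround)
    (heq : ∀ x, a.hasVar x → σ x = σ' x ∨ Formula.eq (σ x) (σ' x) ∈ T)
    (h : (a.substA σ).toFormula ∈ T) : (a.substA σ').toFormula ∈ T := by
  have hT' : ∀ φ, φ ∈ T ↔ Entails Sem.any Ψ T φ := fun φ => by
    conv_lhs => rw [hT]
    rfl
  rw [hT'] at h ⊢
  intro w hw B
  have h1 : ValA w B (a.substA σ) := h w hw B
  change ValA w B (a.substA σ')
  rw [h_valA_subst] at h1 ⊢
  refine (h_valA_congr w _ _ a fun x hx => ?_).1 h1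
  rcases heq x hx with h2 | h2
  · rw [h2]
  · exact (hT' _).1 h2 w hw B

/-- The free term model over a model `w`. -/
def TermM (w : Interp S) (ne : ∃ t : Term S, t.isGround) : Interp S where
  U := {t : Term S // t.isGround}
  nonempty := ⟨⟨ne.choose, ne.choose_spec⟩⟩
  interpF f ts := ⟨Term.func f (fun i => (ts i).1), fun i => (ts i).2⟩
  interpP p ts := w.interpP p (fun i => (ts i).1.evalG w)

theorem h_TermM_eval (w : Interp S) (ne : ∃ t : Term S, t.isGround)
    (B : ℕ → (TermM w ne).U) (t : Term S) :
    (t.eval (TermM w ne) B).1.evalG w = t.eval w (fun x => (B x).1.evalG w) := by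
  induction t with
  | var x => rfl
  | func f ts ih =>
    change w.interpF f (fun i => ((ts i).eval (TermM w ne) B).1.evalG w) = _
    simp only [ih, Term.eval]

theorem h_TermM_ground (w : Interp S) (ne : ∃ t : Term S, t.isGround)
    (B : ℕ → (TermM w ne).U) (t : Term S) (ht : t.isGround) :
    (t.eval (TermM w ne) B).1 = t := by
  induction t with
  | var x => exact ht.elim
  | func f ts ih =>
    change Term.func f (fun i => ((ts i).eval (TermM w ne) B).1) = _
    congr 1
    funext i
    exact ih i (ht i)

theorem h_noEq (e : Bool) (Φ : Set (Formula S)) (hΦ : ∀ φ ∈ Φ, φ.isPropositional)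
    (P : Program S) (hn : progNormal P) (hF : ∀ f, f ∈ progFuncs P) (T : Set (Formula S))
    (hT : StableExp Sem.any (PsiE e Φ P) T) (w : Interp S) (hw : MM e Φ P w T)
    (t₁ t₂ : Term S) (g1 : t₁.isGround) (g2 : t₂.isGround) (hne : t₁ ≠ t₂) :
    Formula.eq t₁ t₂ ∉ T := by
  intro hmem
  have ne : ∃ t : Term S, t.isGround := ⟨t₁, g1⟩
  have hM : MM e Φ P (TermM w ne) T := by
    have hval : ∀ (B : ℕ → (TermM w ne).U) a,
        ValA (TermM w ne) B a ↔ ValA w (fun x => (B x).1.evalG w) a := by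
      intro B a
      change w.interpP _ _ ↔ w.interpP _ _
      simp only [h_TermM_eval]
    have hL : ∀ (B : ℕ → (TermM w ne).U) a,
        LAt (TermM w ne) T B a ↔ LAt w T (fun x => (B x).1.evalG w) a := by
      intro B a
      constructor
      · rintro ⟨σ, hσ, hm⟩
        refine ⟨σ, fun x hx => ⟨(hσ x hx).1, ?_⟩, hm⟩
        have h1 : (Term.evalG (TermM w ne) (σ x)).1 = (B x).1 := congrArg Subtype.val (hσ x hx).2
        have h2 : (Term.evalG (TermM w ne) (σ x)).1 = σ x :=
          h_TermM_ground w ne _ _ (hσ x hx).1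
        exact congrArg (Term.evalG w) (h2.symm.trans h1)
      · rintro ⟨σ, hσ, hm⟩
        refine ⟨fun x => (B x).1, fun x hx => ⟨(B x).2, ?_⟩, ?_⟩
        · exact Subtype.ext (h_TermM_ground w ne _ _ (B x).2)
        · refine h_clo _ T hT a σ _ (fun x hx => (hσ x hx).1) (fun x hx => ?_) hm
          by_cases hc : σ x = (B x).1
          · exact Or.inl hc
          · exact Or.inr (hw.2.2 _ _ (hσ x hx).1 (B x).2 hc (hσ x hx).2)
    refine ⟨h_modelsT_prop w _ T T Φ hΦ (fun p hp v v' => h_arity0 w p hp _ _) hw.1, ?_, ?_⟩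
    · intro r hr h hh B hpos hneg
      have := hw.2.1 r hr h hh (fun x => (B x).1.evalG w)
        (fun b hb => by rw [← hval, ← hL]; exact hpos b hb)
        (fun c hc => by rw [← hL]; exact hneg c hc)
      rw [hval, hL]; exact this
    · intro s₁ s₂ k1 k2 hk he
      have := congrArg Subtype.val he
      unfold Term.evalG at this
      rw [h_TermM_ground _ _ _ _ k1, h_TermM_ground _ _ _ _ k2] at this
      exact (hk this).elim
  rw [hT] at hmem
  have := hmem _ ((h_MM e Φ P hn hF _ T).2 hM) (fun _ => (TermM w ne).dflt)
  have := congrArg Subtype.val this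
  rw [h_TermM_ground _ _ _ _ g1, h_TermM_ground _ _ _ _ g2] at this
  exact hne this

theorem h_core (e : Bool) (Φ : Set (Formula S)) (hΦ : ∀ φ ∈ Φ, φ.isPropositional)
    (P : Program S) (hn : progNormal P) (hF : ∀ f, f ∈ progFuncs P) (T : Set (Formula S))
    (hT : StableExp Sem.any (PsiE e Φ P) T) (w : Interp S) (hw : MM false Φ P w T)
    (hs : progSafe P ∨ ∀ k : w.U, IsNamed w k) : MM true Φ P w T := by
  classical
  refine ⟨hw.1, fun r hr h hh B hpos hneg => ⟨(hw.2.1 r hr h hh B hpos hneg).1, fun _ => ?_⟩,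
    hw.2.2⟩
  have hnamed : ∀ x, r.hasVar x → IsNamed w (B x) := by
    intro x hx
    rcases hs with hs | hs
    · obtain ⟨b, hb, hxb⟩ := hs r hr x hx
      obtain ⟨σ, hσ, -⟩ := (hpos b hb).2
      exact ⟨σ x, hσ x hxb⟩
    · exact hs _
  have hσ : ∃ σ : ℕ → Term S, ∀ x, r.hasVar x → (σ x).isGround ∧ Term.evalG w (σ x) = B x := by
    refine ⟨fun x => if hx : r.hasVar x then (hnamed x hx).choose else Term.var 0, ?_⟩
    intro x hx
    simp only [hx, dif_pos]
    exact (hnamed x hx).choose_spec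
  obtain ⟨σ, hσ⟩ := hσ
  have vh : ∀ x, h.hasVar x → r.hasVar x := fun x hx => ⟨h, by simp [Rule.atoms, hh], hx⟩
  have vp : ∀ b ∈ r.pos, ∀ x, b.hasVar x → r.hasVar x := fun b hb x hx =>
    ⟨b, by simp [Rule.atoms, hb], hx⟩
  have vn : ∀ b ∈ r.neg, ∀ x, b.hasVar x → r.hasVar x := fun b hb x hx =>
    ⟨b, by simp [Rule.atoms, hb], hx⟩
  refine ⟨σ, fun x hx => hσ x (vh x hx), ?_⟩
  have hT' : ∀ φ, φ ∈ T ↔ Entails Sem.any (PsiE e Φ P) T φ := fun φ => by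
    conv_lhs => rw [hT]
    rfl
  rw [hT']
  intro w' hw' B''
  have hw'M := (h_MM e Φ P hn hF w' T).1 hw'
  have hno := h_noEq e Φ hΦ P hn hF T hT w' hw'M
  have inj : ∀ (v : Interp S), UN v T → ∀ t₁ t₂ : Term S, t₁.isGround → t₂.isGround →
      t₁.evalG v = t₂.evalG v → t₁ = t₂ := by
    intro v hv t₁ t₂ g1 g2 he
    by_contra hne
    exact hno t₁ t₂ g1 g2 hne (hv t₁ t₂ g1 g2 hne he)
  change ValA w' B'' (h.substA σ)
  rw [h_valA_subst]
  refine (hw'M.2.1 r hr h hh _ (fun b hb => ?_) (fun c hc hL => ?_)).1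
  · obtain ⟨τ, hτ, hm⟩ := (hpos b hb).2
    have : b.substA τ = b.substA σ := h_substA_congr b τ σ fun x hx =>
      inj w hw.2.2 _ _ (hτ x hx).1 (hσ x (vp b hb x hx)).1
        ((hτ x hx).2.trans (hσ x (vp b hb x hx)).2.symm)
    rw [this] at hm
    refine ⟨?_, σ, fun x hx => ⟨(hσ x (vp b hb x hx)).1, ?_⟩, hm⟩
    · rw [← h_valA_subst]
      exact (hT' _).1 hm w' hw' B''
    · exact (Term.h_eval_ground _ _ _ (hσ x (vp b hb x hx)).1).symm
  · obtain ⟨τ, hτ, hm⟩ := hL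
    have : c.substA τ = c.substA σ := h_substA_congr c τ σ fun x hx =>
      inj w' hw'M.2.2 _ _ (hτ x hx).1 (hσ x (vn c hc x hx)).1
        ((hτ x hx).2.trans (Term.h_eval_ground _ _ _ (hσ x (vn c hc x hx)).1))
    rw [this] at hm
    exact hneg c hc ⟨σ, fun x hx => hσ x (vn c hc x hx), hm⟩

theorem h_MM_mono (Φ : Set (Formula S)) (P : Program S) (w : Interp S) (T : Set (Formula S))
    (h : MM true Φ P w T) : MM false Φ P w T :=
  ⟨h.1, fun r hr a ha B hp hn => ⟨(h.2.1 r hr a ha B hp hn).1, fun h => by simp at h⟩, h.2.2⟩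

/-- The submodel of named individuals. -/
def NamM (w : Interp S) (ne : ∃ t : Term S, t.isGround) : Interp S where
  U := {k : w.U // IsNamed w k}
  nonempty := ⟨⟨ne.choose.evalG w, ne.choose, ne.choose_spec, rfl⟩⟩
  interpF f ts := ⟨w.interpF f (fun i => (ts i).1),
    Term.func f (fun i => (ts i).2.choose), fun i => (ts i).2.choose_spec.1, by
      change w.interpF f (fun i => Term.evalG w ((ts i).2.choose)) = _
      congr 1
      funext i
      exact (ts i).2.choose_spec.2⟩
  interpP p ts := w.interpP p (fun i => (ts i).1)

theorem h_NamM_eval (w : Interp S) (ne : ∃ t : Term S, t.isGround)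
    (B : ℕ → (NamM w ne).U) (t : Term S) :
    (t.eval (NamM w ne) B).1 = t.eval w (fun x => (B x).1) := by
  induction t with
  | var x => rfl
  | func f ts ih =>
    change w.interpF f (fun i => ((ts i).eval (NamM w ne) B).1) = _
    simp only [ih, Term.eval]

theorem h_NamM_evalG (w : Interp S) (ne : ∃ t : Term S, t.isGround) (t : Term S)
    (g : t.isGround) : (t.evalG (NamM w ne)).1 = t.evalG w := by
  unfold Term.evalG
  rw [h_NamM_eval]
  exact Term.h_eval_ground _ _ _ g

theorem h_NamM_named (w : Interp S) (ne : ∃ t : Term S, t.isGround) (k : (NamM w ne).U) :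
    IsNamed (NamM w ne) k := by
  obtain ⟨t, g, ht⟩ := k.2
  exact ⟨t, g, Subtype.ext ((h_NamM_evalG w ne t g).trans ht)⟩

theorem h_NamM_sat (w : Interp S) (ne : ∃ t : Term S, t.isGround) (T : Set (Formula S))
    (φ : Formula S) (ho : φ.isObjective) (hg : φ.isGround) (B : ℕ → (NamM w ne).U)
    (B' : ℕ → w.U) : Sat Sem.any (NamM w ne) T φ B ↔ Sat Sem.any w T φ B' := by
  have ev : ∀ t : Term S, t.isGround → (t.eval (NamM w ne) B).1 = t.eval w B' := by
    intro t g
    rw [h_NamM_eval, Term.h_eval_ground w _ t g, Term.h_eval_ground w _ t g]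
  induction φ with
  | atom p ts =>
    change w.interpP p _ ↔ w.interpP p _
    have : (fun i => ((ts i).eval (NamM w ne) B).1) = fun i => (ts i).eval w B' :=
      funext fun i => ev _ (hg i)
    rw [← this]
  | eq t₁ t₂ =>
    change _ = _ ↔ _ = _
    rw [← ev _ hg.1, ← ev _ hg.2]
    exact Subtype.ext_iff
  | not φ ih => exact not_congr (ih ho hg)
  | and φ ψ ih1 ih2 => exact and_congr (ih1 ho.1 hg.1) (ih2 ho.2 hg.2)
  | ex _ _ => exact hg.elim
  | box _ => exact ho.elim

theorem h_NamM_MM (Φ : Set (Formula S)) (hΦ : ∀ φ ∈ Φ, φ.isPropositional)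
    (P : Program S) (T : Set (Formula S)) (w : Interp S) (ne : ∃ t : Term S, t.isGround)
    (hw : MM false Φ P w T) : MM false Φ P (NamM w ne) T := by
  have hval : ∀ (B : ℕ → (NamM w ne).U) a,
      ValA (NamM w ne) B a ↔ ValA w (fun x => (B x).1) a := by
    intro B a
    change w.interpP _ _ ↔ w.interpP _ _
    simp only [h_NamM_eval]
  have hL : ∀ (B : ℕ → (NamM w ne).U) a,
      LAt (NamM w ne) T B a ↔ LAt w T (fun x => (B x).1) a := by
    intro B a
    unfold LAt
    refine exists_congr fun σ => and_congr_left fun _ => forall_congr' fun x =>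
      imp_congr_right fun _ => and_congr_right fun g => ?_
    rw [← h_NamM_evalG w ne _ g]
    exact Subtype.ext_iff
  refine ⟨h_modelsT_prop w _ T T Φ hΦ (fun p hp v v' => h_arity0 w p hp _ _) hw.1, ?_, ?_⟩
  · intro r hr h hh B hpos hneg
    have := hw.2.1 r hr h hh (fun x => (B x).1)
      (fun b hb => by rw [← hval, ← hL]; exact hpos b hb)
      (fun c hc => by rw [← hL]; exact hneg c hc)
    rw [hval, hL]; exact this
  · intro t₁ t₂ g1 g2 hne he
    refine hw.2.2 t₁ t₂ g1 g2 hne ?_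
    rw [← h_NamM_evalG w ne _ g1, ← h_NamM_evalG w ne _ g2, he]

theorem h_MM_congr (e : Bool) (Φ : Set (Formula S)) (hΦ : ∀ φ ∈ Φ, φ.isPropositional)
    (P : Program S) (T T' : Set (Formula S))
    (hTT : ∀ φ : Formula S, φ.isObjective → φ.isGround → (φ ∈ T ↔ φ ∈ T'))
    (w : Interp S) (hw : MM e Φ P w T) : MM e Φ P w T' := by
  have hL : ∀ B a, LAt w T B a ↔ LAt w T' B a := by
    intro B a
    unfold LAt
    refine exists_congr fun σ => and_congr_right fun h => ?_
    have := h_ground_og a σ (fun x hx => (h x hx).1)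
    exact hTT _ this.1 this.2
  refine ⟨h_modelsT_prop w w T T' Φ hΦ (fun p hp v v' => h_arity0 w p hp _ _) hw.1, ?_, ?_⟩
  · intro r hr h hh B hpos hneg
    have := hw.2.1 r hr h hh B
      (fun b hb => by rw [hL]; exact hpos b hb)
      (fun c hc => by rw [hL]; exact hneg c hc)
    rw [← hL]; exact this
  · intro t₁ t₂ g1 g2 hne he
    exact (hTT (Formula.eq t₁ t₂) trivial ⟨g1, g2⟩).1 (hw.2.2 t₁ t₂ g1 g2 hne he)

theorem h_og (e : Bool) (Φ : Set (Formula S)) (hΦ : ∀ φ ∈ Φ, φ.isPropositional)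
    (P : Program S) (hn : progNormal P) (hF : ∀ f, f ∈ progFuncs P) (T : Set (Formula S))
    (hT : StableExp Sem.any (PsiE e Φ P) T) (ne : ∃ t : Term S, t.isGround)
    (φ : Formula S) (ho : φ.isObjective) (hg : φ.isGround) (e' : Bool) :
    φ ∈ T ↔ Entails Sem.any (PsiE e' Φ P) T φ := by
  have main : Entails Sem.any (PsiE true Φ P) T φ ↔ Entails Sem.any (PsiE false Φ P) T φ := by
    constructor
    · intro h w hw B
      rw [h_MM _ Φ P hn hF] at hw
      have h1 := h_NamM_MM Φ hΦ P T w ne hw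
      have h2 := h_core e Φ hΦ P hn hF T hT _ h1 (Or.inr (h_NamM_named w ne))
      exact (h_NamM_sat w ne T φ ho hg (fun _ => (NamM w ne).dflt) B).1
        (h _ ((h_MM _ Φ P hn hF _ _).2 h2) _)
    · intro h w hw
      rw [h_MM _ Φ P hn hF] at hw
      exact h w ((h_MM _ Φ P hn hF _ _).2 (h_MM_mono _ _ _ _ hw))
  have : φ ∈ T ↔ Entails Sem.any (PsiE e Φ P) T φ := by
    conv_lhs => rw [hT]
    rfl
  rw [this]
  cases e <;> cases e' <;> simp [main]

def bdepth : Formula S → ℕ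
  | Formula.atom _ _ => 0
  | Formula.eq _ _ => 0
  | Formula.not φ => bdepth φ
  | Formula.and φ ψ => max (bdepth φ) (bdepth ψ)
  | Formula.ex _ φ => bdepth φ
  | Formula.box φ => bdepth φ + 1

theorem h_bdepth_subst (φ : Formula S) (β : ℕ → Option (Term S)) :
    bdepth (φ.subst β) = bdepth φ := by
  induction φ generalizing β with
  | atom _ _ => rfl
  | eq _ _ => rfl
  | not φ ih => exact ih β
  | and φ ψ ih1 ih2 => simp only [Formula.subst, bdepth, ih1, ih2]
  | ex _ φ ih => exact ih _
  | box φ ih => simp only [Formula.subst, bdepth, ih]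

theorem h_bdepth_obj (φ : Formula S) (h : φ.isObjective) : bdepth φ = 0 := by
  induction φ with
  | atom _ _ => rfl
  | eq _ _ => rfl
  | not φ ih => exact ih h
  | and φ ψ ih1 ih2 => simp only [bdepth, ih1 h.1, ih2 h.2, max_self]
  | ex _ φ ih => exact ih h
  | box φ ih => exact h.elim

theorem h_sat_depth (w : Interp S) (Γ Γ' : Set (Formula S)) (φ : Formula S)
    (h : ∀ ψ, bdepth ψ < bdepth φ → (ψ ∈ Γ ↔ ψ ∈ Γ')) (B : ℕ → w.U) :
    Sat Sem.any w Γ φ B ↔ Sat Sem.any w Γ' φ B := by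
  induction φ generalizing B with
  | atom _ _ => rfl
  | eq _ _ => rfl
  | not φ ih => exact not_congr (ih h B)
  | and φ ψ ih1 ih2 =>
    exact and_congr (ih1 (fun χ hχ => h χ (lt_of_lt_of_le hχ (le_max_left _ _))) B)
      (ih2 (fun χ hχ => h χ (lt_of_lt_of_le hχ (le_max_right _ _))) B)
  | ex x φ ih => exact exists_congr fun u => ih h _
  | box φ ih =>
    simp only [Sat]
    refine exists_congr fun β => and_congr_right fun _ => and_congr_right fun _ => h _ ?_
    rw [h_bdepth_subst]
    exact Nat.lt_succ_self _

def Dst (M : Interp S → Prop) : ℕ → Set (Formula S)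
  | 0 => ∅
  | n + 1 => {φ | ∀ w, M w → ModelsF Sem.any w (Dst M n) φ}

theorem h_fix (M : Interp S → Prop) :
    ∃ T' : Set (Formula S), T' = {φ | ∀ w, M w → ModelsF Sem.any w T' φ} := by
  let T' : Set (Formula S) := {φ | φ ∈ Dst M (bdepth φ + 1)}
  have key : ∀ n (φ : Formula S), bdepth φ < n → (φ ∈ Dst M n ↔ φ ∈ T') := by
    intro n
    induction n using Nat.strong_induction_on with
    | _ n ih =>
      intro φ hφ
      obtain ⟨m, rfl⟩ : ∃ m, n = m + 1 := ⟨n - 1, by omega⟩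
      change (∀ w, M w → ∀ B, Sat Sem.any w (Dst M m) φ B) ↔
        (∀ w, M w → ∀ B, Sat Sem.any w (Dst M (bdepth φ)) φ B)
      refine forall_congr' fun w => imp_congr_right fun _ => forall_congr' fun B => ?_
      refine h_sat_depth w _ _ φ (fun ψ hψ => ?_) B
      rw [ih m (by omega) ψ (by omega), ih (bdepth φ) (by omega) ψ hψ]
  refine ⟨T', ?_⟩
  ext φ
  change (∀ w, M w → ∀ B, Sat Sem.any w (Dst M (bdepth φ)) φ B) ↔
    (∀ w, M w → ∀ B, Sat Sem.any w T' φ B)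
  refine forall_congr' fun w => imp_congr_right fun _ => forall_congr' fun B => ?_
  exact h_sat_depth w _ _ φ (fun ψ hψ => key _ ψ hψ) B

theorem h_half (e e' : Bool) (Φ : Set (Formula S)) (hΦ : ∀ φ ∈ Φ, φ.isPropositional)
    (P : Program S) (hn : progNormal P) (hF : ∀ f, f ∈ progFuncs P) (T : Set (Formula S))
    (hT : StableExp Sem.any (PsiE e Φ P) T) (ne : ∃ t : Term S, t.isGround) :
    ∃ T', StableExp Sem.any (PsiE e' Φ P) T' ∧ ogOf T = ogOf T' := by
  obtain ⟨T', hT'⟩ := h_fix (fun w => ModelsT Sem.any w T (PsiE e' Φ P))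
  have hog : ∀ φ : Formula S, φ.isObjective → φ.isGround → (φ ∈ T ↔ φ ∈ T') := by
    intro φ ho hg
    rw [h_og e Φ hΦ P hn hF T hT ne φ ho hg e']
    conv_rhs => rw [hT']
    refine forall_congr' fun w => imp_congr_right fun _ => forall_congr' fun B => ?_
    refine h_sat_depth w _ _ φ (fun ψ hψ => ?_) B
    rw [h_bdepth_obj φ ho] at hψ
    exact absurd hψ (Nat.not_lt_zero _)
  refine ⟨T', ?_, ?_⟩
  · have hm : ∀ w, ModelsT Sem.any w T (PsiE e' Φ P) ↔
        ModelsT Sem.any w T' (PsiE e' Φ P) := by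
      intro w
      rw [h_MM _ Φ P hn hF, h_MM _ Φ P hn hF]
      exact ⟨h_MM_congr e' Φ hΦ P _ _ hog w,
        h_MM_congr e' Φ hΦ P _ _ (fun φ ho hg => (hog φ ho hg).symm) w⟩
    unfold StableExp Entails
    simp only [← hm]
    exact hT'
  · ext φ
    simp only [ogOf, Set.mem_setOf_eq]
    exact and_congr_left fun h => hog φ h.1 h.2

theorem h_safe (e e' : Bool) (Φ : Set (Formula S)) (hΦ : ∀ φ ∈ Φ, φ.isPropositional)
    (P : Program S) (hn : progNormal P) (hF : ∀ f, f ∈ progFuncs P) (T : Set (Formula S))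
    (hs : progSafe P)
    (hT : StableExp Sem.any (PsiE e Φ P) T) : StableExp Sem.any (PsiE e' Φ P) T := by
  have hm : ∀ w, MM true Φ P w T ↔ MM false Φ P w T := fun w =>
    ⟨h_MM_mono Φ P w T, fun h => h_core e Φ hΦ P hn hF T hT w h (Or.inl hs)⟩
  have : ∀ w, ModelsT Sem.any w T (PsiE e' Φ P) ↔ ModelsT Sem.any w T (PsiE e Φ P) := by
    intro w
    rw [h_MM _ Φ P hn hF, h_MM _ Φ P hn hF]
    cases e <;> cases e' <;> simp [hm]
  unfold StableExp Entails at hT ⊢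
  simp only [this]
  exact hT

end Helpers

/-- For a propositional theory `Φ` and a normal program `P`,
`ι_EB(Φ,P) ≡ᴱ_og ι_EH(Φ,P)`; if `P` is moreover safe, then `ι_EB(Φ,P)` and
`ι_EH(Φ,P)` have exactly the same stableᴱ expansions. -/
theorem stmt18 {S : Sig} (Φ : Set (Formula S)) (hΦ : PropTheory Φ)
    (P : Program S) (hwf : progWf P) (hnormal : progNormal P)
    (hgood : goodSig P) (hcov : CoverSig Φ P) :
    ExpEquivSel Sem.any ogOf (Φ ∪ tauEB P) (Φ ∪ tauEH P) ∧
    (progSafe P → ExpEquiv Sem.any (Φ ∪ tauEB P) (Φ ∪ tauEH P)) := by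
  have hp := hΦ.2
  have hF : ∀ f, f ∈ progFuncs P := by
    intro f
    rcases hcov.1 f with ⟨φ, hφ, hf⟩ | hf
    · rw [h_prop_funcs φ (hp φ hφ)] at hf
      exact hf.elim
    · exact hf
  have hsafe : progSafe P → ExpEquiv Sem.any (Φ ∪ tauEB P) (Φ ∪ tauEH P) := fun hs T =>
    ⟨fun h => h_safe false true Φ hp P hnormal hF T hs h,
      fun h => h_safe true false Φ hp P hnormal hF T hs h⟩
  refine ⟨?_, hsafe⟩
  by_cases ne : ∃ t : Term S, t.isGround
  · refine ⟨fun T hT => h_half false true Φ hp P hnormal hF T hT ne, fun T hT => ?_⟩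
    obtain ⟨T', h1, h2⟩ := h_half true false Φ hp P hnormal hF T hT ne
    exact ⟨T', h1, h2.symm⟩
  · have hs : progSafe P := by
      rintro r hr x ⟨a, ha, i, hi⟩
      obtain ⟨f, -, hf⟩ := hgood ⟨a.p, ⟨r, hr, a, ha, rfl⟩, by have := i.2; omega⟩
      exact (ne ⟨Term.func f (fun _ => Term.var 0), fun i => absurd i.2 (by omega)⟩).elim
    exact ⟨fun T hT => ⟨T, (hsafe hs T).1 hT, rfl⟩, fun T hT => ⟨T, (hsafe hs T).2 hT, rfl⟩⟩
end
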